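/- In a finite von Neumann algebra, singletons in P(M)/∼ are closed in the quotient operator topology; that is, the quotient topology is T₁. -/

import Mathlib

open ContinuousLinearMap Filter Topology

universe u

noncomputable section

variable {H : Type u} [NormedAddCommGroup H] [InnerProductSpace ℂ H] [CompleteSpace H]

/-- `p` is an (orthogonal) projection belonging to the von Neumann algebra `M`. -/
def IsProjIn (M : VonNeumannAlgebra H) (p : H →L[ℂ] H) : Prop :=
  p ∈ M ∧ IsSelfAdjoint p ∧ p * p = p

/-- Murray–von Neumann equivalence of `p` and `q` relative to `M`:
there is a partial isometry `v ∈ M` with `v* v = p` and `v v* = q`. -/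
def MvNEquiv (M : VonNeumannAlgebra H) (p q : H →L[ℂ] H) : Prop :=
  ∃ v ∈ M, adjoint v * v = p ∧ v * adjoint v = q

/-- The order on projections: `p ≤ q` iff `p q = p = q p`. -/
def ProjLE (p q : H →L[ℂ] H) : Prop := p * q = p ∧ q * p = p

/-- Murray–von Neumann subequivalence `p ≼ q`: `p` is equivalent to a subprojection of `q`. -/
def SubEquiv (M : VonNeumannAlgebra H) (p q : H →L[ℂ] H) : Prop :=
  ∃ r, IsProjIn M r ∧ MvNEquiv M p r ∧ ProjLE r q

/-- `z` is a central projection of `M`. -/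
def IsCentralProj (M : VonNeumannAlgebra H) (z : H →L[ℂ] H) : Prop :=
  IsProjIn M z ∧ ∀ x ∈ M, z * x = x * z

/-- A projection `p` is finite: `p ∼ q ≤ p` implies `q = p`. -/
def FiniteProj (M : VonNeumannAlgebra H) (p : H →L[ℂ] H) : Prop :=
  ∀ q, IsProjIn M q → ProjLE q p → MvNEquiv M p q → q = p

/-- A projection `p` is properly infinite: it is a countably infinite sum of pairwise
orthogonal projections, each equivalent to `p`. -/
def ProperlyInfiniteProj (M : VonNeumannAlgebra H) (p : H →L[ℂ] H) : Prop :=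
  p ≠ 0 ∧ ∃ e : ℕ → H →L[ℂ] H, (∀ n, IsProjIn M (e n)) ∧
    (Pairwise fun m n => e m * e n = 0) ∧ (∀ n, MvNEquiv M (e n) p) ∧
    ∀ ξ : H, HasSum (fun n => e n ξ) (p ξ)

/-- `z` is the central support of `h`: the smallest central projection with `z h = h`. -/
def IsCentralSupport (M : VonNeumannAlgebra H) (h z : H →L[ℂ] H) : Prop :=
  IsCentralProj M z ∧ z * h = h ∧ ∀ w, IsCentralProj M w → w * h = h → z * w = z

/-- The projection `e` is σ-finite relative to `M`: every family of pairwise orthogonal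
nonzero subprojections of `e` in `M` is countable. -/
def SigmaFiniteProj (M : VonNeumannAlgebra H) (e : H →L[ℂ] H) : Prop :=
  ∀ S : Set (H →L[ℂ] H), (∀ q ∈ S, IsProjIn M q ∧ q ≠ 0 ∧ ProjLE q e) →
    (S.Pairwise fun a b => a * b = 0) → S.Countable

/-- Kadison–Pedersen equivalence on the positive cone: `h ≈ k` iff there is a family
`{x_α} ⊆ M` with `h = Σ x_α* x_α` and `k = Σ x_α x_α*` (sums in the strong topology). -/
def KPEquiv (M : VonNeumannAlgebra H) (h k : H →L[ℂ] H) : Prop :=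
  ∃ (ι : Type u) (x : ι → H →L[ℂ] H), (∀ i, x i ∈ M) ∧
    (∀ ξ : H, HasSum (fun i => (adjoint (x i) * x i) ξ) (h ξ)) ∧
    (∀ ξ : H, HasSum (fun i => (x i * adjoint (x i)) ξ) (k ξ))

/-- Operator order: `a ≤ b` iff `b - a` is positive. -/
def OpLE (a b : H →L[ℂ] H) : Prop := (b - a).IsPositive

/-- `h ∈ M₊` is finite in the Kadison–Pedersen sense: `h ≈ k ≤ h` implies `k = h`. -/
def KPFinite (M : VonNeumannAlgebra H) (h : H →L[ℂ] H) : Prop :=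
  ∀ k, k ∈ M → k.IsPositive → OpLE k h → KPEquiv M h k → k = h

/-- `h ∈ M₊` is properly infinite: `z h` is finite and nonzero for no central projection `z`. -/
def KPProperlyInfinite (M : VonNeumannAlgebra H) (h : H →L[ℂ] H) : Prop :=
  h ≠ 0 ∧ ∀ z, IsCentralProj M z → KPFinite M (z * h) → z * h = 0

/-- The set of projections of `M`. -/
def ProjSet (M : VonNeumannAlgebra H) := {p : H →L[ℂ] H // IsProjIn M p}

/-- The strong operator topology on the projections of `M` (topology of pointwise convergence). -/
instance (M : VonNeumannAlgebra H) : TopologicalSpace (ProjSet M) :=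
  TopologicalSpace.induced (fun p : ProjSet M => (fun ξ => p.1 ξ : H → H)) inferInstance

/-- The quotient `P(M)/∼` of the projections of `M` by Murray–von Neumann equivalence,
carrying the quotient (strong operator) topology. -/
abbrev PQuot (M : VonNeumannAlgebra H) :=
  Quot (fun p q : ProjSet M => MvNEquiv M p.1 q.1)

/-- The quotient map `P(M) → P(M)/∼`. -/
def pquotMk (M : VonNeumannAlgebra H) : ProjSet M → PQuot M := Quot.mk _

/-- The strong operator topology on `B(H)`. -/
def SOT : TopologicalSpace (H →L[ℂ] H) :=
  TopologicalSpace.induced (fun a : H →L[ℂ] H => (fun ξ => a ξ : H → H)) inferInstance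

/-- The order induced on `P(M)/∼` by Murray–von Neumann subequivalence. -/
def QLE (M : VonNeumannAlgebra H) (a b : PQuot M) : Prop :=
  ∃ p q : ProjSet M, a = pquotMk M p ∧ b = pquotMk M q ∧ SubEquiv M p.1 q.1

/-!
The class of `q` is closed because a strong limit `p` of projections equivalent to `q` is itself
equivalent to `q`. By finiteness it is enough that `p ≼ q`, the same statement for the complements
giving `1 - p ≼ 1 - q`. If `p ⋠ q`, comparability yields a nonzero cyclic projection `e`, orthogonal
to a projection `r`, such that `r + e` is a strong limit of projections subequivalent to `r`. An
Egorov argument shows that the cyclic projection of any finite set of vectors in the range of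
`r + e` is then subequivalent to `r`. Hence one finds one after another infinitely many copies of
`e` under `r` with orthogonal ranges, and shifting them produces a proper isometry in `M`.
-/

open scoped InnerProductSpace

section PartialIsometry

variable {R : Type*}

/-- `v` is a partial isometry. The encoding `v v* v = v` is the one that makes sense in any
semigroup with involution. -/
def IsPartialIsometry [Mul R] [Star R] (v : R) : Prop := v * star v * v = v

theorem mul_eq_right_of_isStarProjection [NonUnitalNormedRing R] [StarRing R]
    [CStarRing R] {e f : R} (he : IsStarProjection e) (hf : IsStarProjection f)
    (h : e * f * e = e) : f * e = e := by
  rw [← sub_eq_zero, ← CStarRing.star_mul_self_eq_zero_iff]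
  have hee := he.isIdempotentElem.eq
  have hff := hf.isIdempotentElem.eq
  simp only [star_sub, star_mul, he.isSelfAdjoint.star_eq, hf.isSelfAdjoint.star_eq, mul_sub,
    sub_mul]
  grind

namespace IsPartialIsometry

section Semigroup

variable [Semigroup R] [StarMul R] {v : R}

protected theorem star (hv : IsPartialIsometry v) : IsPartialIsometry (star v) := by
  have := congrArg Star.star hv
  rwa [star_mul, star_mul, ← mul_assoc] at this

theorem mul_star_mul_self (hv : IsPartialIsometry v) : v * (star v * v) = v := by
  rw [← mul_assoc, hv]

theorem isStarProjection_star_mul_self (hv : IsPartialIsometry v) :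
    IsStarProjection (star v * v) :=
  ⟨by rw [IsIdempotentElem, mul_assoc, hv.mul_star_mul_self], .star_mul_self v⟩

theorem isStarProjection_mul_star_self (hv : IsPartialIsometry v) :
    IsStarProjection (v * star v) := by
  simpa only [star_star] using hv.star.isStarProjection_star_mul_self

end Semigroup

theorem add [NonUnitalRing R] [StarRing R] {v w : R} (hv : IsPartialIsometry v)
    (hw : IsPartialIsometry w) (h₁ : star v * w = 0) (h₂ : v * star w = 0) :
    IsPartialIsometry (v + w) := by
  have h₁' : star w * v = 0 := by simpa using congrArg Star.star h₁
  have h₂' : w * star v = 0 := by simpa using congrArg Star.star h₂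
  simp only [IsPartialIsometry, star_add, add_mul, mul_add, h₂, h₂', zero_add, add_zero] at *
  rw [hv, hw, mul_assoc v, h₁, mul_assoc w, h₁', mul_zero, mul_zero, add_zero, zero_add]

theorem add_mul_star_mul_self [NonUnitalRing R] [StarRing R] {v w : R} (hv : IsPartialIsometry v)
    (h : v * star w = 0) : (v + w) * (star v * v) = v := by
  have h' : w * star v = 0 := by simpa using congrArg Star.star h
  rw [add_mul, hv.mul_star_mul_self, ← mul_assoc, h', zero_mul, add_zero]

theorem eq_zero_of_mul_star_add_mul_add [NonUnitalRing R] [StarRing R] {v w : R}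
    (hv : IsPartialIsometry v) (h₁ : star v * w = 0) (h₂ : v * star w = 0)
    (h : v * (star (v + w) * (v + w)) = v + w) : w = 0 := by
  have hvw : v * (star (v + w) * (v + w)) = v := by
    rw [star_add, add_mul, mul_add (star v), h₁, add_zero, mul_add, hv.mul_star_mul_self,
      ← mul_assoc, h₂, zero_mul, add_zero]
  exact left_eq_add.1 (hvw.symm.trans h)

end IsPartialIsometry

theorem isPartialIsometry_of_isStarProjection_star_mul_self [NonUnitalNormedRing R] [StarRing R]
    [CStarRing R] {v : R} (h : IsStarProjection (star v * v)) : IsPartialIsometry v := by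
  rw [IsPartialIsometry, mul_assoc, ← sub_eq_zero, ← CStarRing.star_mul_self_eq_zero_iff]
  have := h.isIdempotentElem.eq
  simp only [star_sub, star_mul, star_star, mul_sub, sub_mul]
  grind

theorem mul_eq_self_of_star_mul_self_eq [NonUnitalNormedRing R] [StarRing R] [CStarRing R]
    {v e : R} (he : IsStarProjection e) (h : star v * v = e) : v * e = v := by
  subst h
  exact (isPartialIsometry_of_isStarProjection_star_mul_self he).mul_star_mul_self

/-- The type of partial isometries, which carries the extension preorder. -/
structure PartialIsometry (R : Type*) [Mul R] [Star R] where
  val : R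
  isPartialIsometry : IsPartialIsometry val

namespace PartialIsometry

variable [NonUnitalNormedRing R] [StarRing R] [CStarRing R]

/-- `v ≤ w` means that `w` restricts to `v` on the initial space of `v`. -/
instance : LE (PartialIsometry R) := ⟨fun v w => w.1 * (star v.1 * v.1) = v.1⟩

omit [CStarRing R] in
theorem le_def {v w : PartialIsometry R} : v ≤ w ↔ w.1 * (star v.1 * v.1) = v.1 := Iff.rfl

theorem star_mul_of_le {v w : PartialIsometry R} (h : v ≤ w) : star w.1 * v.1 = star v.1 * v.1 := by
  have hv := v.2.isStarProjection_star_mul_self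
  have hw := w.2.isStarProjection_star_mul_self
  rw [le_def] at h
  have key : star w.1 * w.1 * (star v.1 * v.1) = star v.1 * v.1 := by
    refine mul_eq_right_of_isStarProjection hv hw ?_
    conv_rhs => rw [← h, star_mul, hv.isSelfAdjoint.star_eq]
    simp only [mul_assoc]
  rwa [mul_assoc, h] at key

theorem initial_mul_of_le {v w : PartialIsometry R} (h : v ≤ w) :
    star w.1 * w.1 * (star v.1 * v.1) = star v.1 * v.1 := by
  rw [mul_assoc, le_def.1 h, star_mul_of_le h]

instance : Preorder (PartialIsometry R) where
  le_refl v := v.2.mul_star_mul_self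
  le_trans u v w huv hvw := by
    rw [le_def, ← initial_mul_of_le huv, ← mul_assoc, le_def.1 hvw, le_def.1 huv]

end PartialIsometry

end PartialIsometry

theorem star_add_mul_add_of_star_mul_eq_zero {R : Type*} [NonUnitalRing R] [StarRing R] {v w : R}
    (h : star v * w = 0) : star (v + w) * (v + w) = star v * v + star w * w := by
  have h' : star w * v = 0 := by simpa using congrArg star h
  rw [star_add, add_mul, mul_add, mul_add, h, h', add_zero, zero_add]

theorem star_mul_add_one_sub_mul_self {R : Type*} [Ring R] [StarRing R] {v z : R}
    (hz : IsStarProjection z) (hzv : Commute z v) (hzv' : Commute z (star v)) :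
    star (v * z + (1 - z)) * (v * z + (1 - z)) = star v * v * z + (1 - z) := by
  have hsa : star (v * z) = star v * z := by
    rw [star_mul, hz.isSelfAdjoint.star_eq, hzv'.eq]
  rw [star_add_mul_add_of_star_mul_eq_zero, hz.one_sub.isSelfAdjoint.star_eq,
    hz.one_sub.isIdempotentElem.eq, hsa, mul_assoc, ← mul_assoc z, hzv.eq, mul_assoc v,
    hz.isIdempotentElem.eq, mul_assoc]
  rw [hsa, mul_assoc, hz.mul_one_sub_self, mul_zero]

namespace IsPartialIsometry

variable {R : Type*} [Ring R] [StarRing R] {v : R}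

theorem mul_one_sub_eq_zero (hv : IsPartialIsometry v) : v * (1 - star v * v) = 0 := by
  rw [mul_sub, mul_one, hv.mul_star_mul_self, sub_self]

theorem star_mul_one_sub_eq_zero (hv : IsPartialIsometry v) : star v * (1 - v * star v) = 0 := by
  simpa only [star_star] using hv.star.mul_one_sub_eq_zero

end IsPartialIsometry

section StrongLimits

theorem tendsto_of_sq_dist_le_sub {X ι : Type*} [PseudoMetricSpace X] [CompleteSpace X] [Preorder ι]
    [IsDirectedOrder ι] [Nonempty ι] {f : ι → X} {φ : ι → ℝ} (hφ : BddAbove (Set.range φ))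
    (h : ∀ i j, i ≤ j → dist (f i) (f j) ^ 2 ≤ φ j - φ i) : ∃ y, Tendsto f atTop (𝓝 y) := by
  have hmono : Monotone φ := fun i j hij => by
    linarith [h i j hij, sq_nonneg (dist (f i) (f j))]
  have hlim := tendsto_atTop_ciSup hmono hφ
  rw [← cauchy_map_iff_exists_tendsto, Metric.cauchy_iff]
  refine ⟨inferInstance, fun ε hε => ?_⟩
  obtain ⟨i, hi⟩ := (hlim.eventually_const_lt (sub_lt_self _ (pow_pos (half_pos hε) 2))).exists
  have hdist : ∀ j ∈ Set.Ici i, dist (f i) (f j) < ε / 2 := fun j hj =>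
    lt_of_pow_lt_pow_left₀ 2 (half_pos hε).le <| by linarith [h i j hj, le_ciSup hφ j]
  refine ⟨f '' Set.Ici i, image_mem_map (mem_atTop i), ?_⟩
  rintro _ ⟨j, hj, rfl⟩ _ ⟨k, hk, rfl⟩
  linarith [dist_triangle_left (f j) (f k) (f i), hdist j hj, hdist k hk]

/-- Convergence of the net `x` to `y` along `l` in the strong operator topology. -/
def StrongTendsto {ι : Type*} (x : ι → H →L[ℂ] H) (l : Filter ι) (y : H →L[ℂ] H) : Prop :=
  ∀ ξ, Tendsto (fun i => x i ξ) l (𝓝 (y ξ))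

namespace StrongTendsto

variable {ι : Type*} {l : Filter ι} {x : ι → H →L[ℂ] H} {y : H →L[ℂ] H}

section

omit [CompleteSpace H]

theorem const (y : H →L[ℂ] H) : StrongTendsto (fun _ : ι => y) l y := fun _ => tendsto_const_nhds

theorem const_mul (a : H →L[ℂ] H) (h : StrongTendsto x l y) :
    StrongTendsto (fun i => a * x i) l (a * y) :=
  fun ξ => (a.continuous.tendsto _).comp (h ξ)

theorem mul_const (h : StrongTendsto x l y) (a : H →L[ℂ] H) :
    StrongTendsto (fun i => x i * a) l (y * a) :=
  fun ξ => h (a ξ)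

theorem congr' {x' : ι → H →L[ℂ] H} (h : StrongTendsto x l y) (hx : x =ᶠ[l] x') :
    StrongTendsto x' l y :=
  fun ξ => (h ξ).congr' (hx.mono fun _ hi => congrArg (fun z : H →L[ℂ] H => z ξ) hi)

theorem unique [l.NeBot] {y' : H →L[ℂ] H} (h : StrongTendsto x l y) (h' : StrongTendsto x l y') :
    y = y' :=
  ContinuousLinearMap.ext fun ξ => tendsto_nhds_unique (h ξ) (h' ξ)

theorem mul_eq_of_eventually [l.NeBot] {a b : H →L[ℂ] H} (h : StrongTendsto x l y)
    (hab : ∀ᶠ i in l, x i * a = b) : y * a = b :=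
  (h.mul_const a).unique ((const b).congr' (hab.mono fun _ hi => hi.symm))

end

theorem star_mul_eq_of_eventually [l.NeBot] {a b : H →L[ℂ] H} (h : StrongTendsto x l y)
    (hab : ∀ᶠ i in l, star (x i) * a = b) : star y * a = b := by
  ext ξ
  refine ext_inner_right ℂ fun η => ?_
  have hlim : Tendsto (fun i => ⟪a ξ, x i η⟫_ℂ) l (𝓝 ⟪a ξ, y η⟫_ℂ) :=
    tendsto_const_nhds.inner (h η)
  rw [mul_apply_eq_comp, star_eq_adjoint, adjoint_inner_left]
  refine tendsto_nhds_unique hlim (tendsto_const_nhds.congr' (hab.mono fun i hi => ?_))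
  rw [← hi, mul_apply_eq_comp, star_eq_adjoint, adjoint_inner_left]

theorem mem [l.NeBot] {M : VonNeumannAlgebra H} (h : StrongTendsto x l y)
    (hM : ∀ i, x i ∈ M) : y ∈ M := by
  rw [← M.commutant_commutant, VonNeumannAlgebra.mem_commutant_iff]
  intro g hg
  refine (h.const_mul g).unique ((h.mul_const g).congr' (.of_forall fun i => ?_))
  exact VonNeumannAlgebra.mem_commutant_iff.1 hg _ (hM i)

end StrongTendsto

omit [CompleteSpace H] in
theorem exists_strongTendsto {ι : Type*} {l : Filter ι} [l.NeBot] {x : ι → H →L[ℂ] H} {C : ℝ}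
    (hx : ∀ i, ‖x i‖ ≤ C) (h : ∀ ξ, ∃ η, Tendsto (fun i => x i ξ) l (𝓝 η)) :
    ∃ y, StrongTendsto x l y := by
  choose y hy using h
  exact ⟨(linearMapOfTendsto y (fun i => (x i : H →ₗ[ℂ] H)) (tendsto_pi_nhds.2 hy)).mkContinuous C
    fun ξ => le_of_tendsto' (hy ξ).norm fun i => (x i).le_of_opNorm_le (hx i) ξ, hy⟩

theorem IsPartialIsometry.norm_le_one {v : H →L[ℂ] H} (hv : IsPartialIsometry v) : ‖v‖ ≤ 1 := by
  have h := hv.isStarProjection_star_mul_self.norm_le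
  rw [CStarRing.norm_star_mul_self] at h
  nlinarith [norm_nonneg v]

theorem norm_apply_sq (x : H →L[ℂ] H) (ξ : H) : ‖x ξ‖ ^ 2 = (⟪(star x * x) ξ, ξ⟫_ℂ).re :=
  apply_norm_sq_eq_inner_adjoint_left x ξ

theorem PartialIsometry.norm_sub_apply_sq_of_le {v w : PartialIsometry (H →L[ℂ] H)} (h : v ≤ w)
    (ξ : H) : ‖v.1 ξ - w.1 ξ‖ ^ 2 = ‖w.1 ξ‖ ^ 2 - ‖v.1 ξ‖ ^ 2 := by
  have h' : star v.1 * w.1 = star v.1 * v.1 := by simpa using congrArg star (star_mul_of_le h)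
  have key : star (v.1 - w.1) * (v.1 - w.1) = star w.1 * w.1 - star v.1 * v.1 := by
    rw [star_sub, sub_mul, mul_sub, mul_sub, h', star_mul_of_le h, sub_self, zero_sub, neg_sub]
  rw [← sub_apply, norm_apply_sq, key, sub_apply, inner_sub_left, Complex.sub_re,
    norm_apply_sq, norm_apply_sq]

theorem PartialIsometry.exists_strongTendsto_of_monotone {ι : Type*} [Preorder ι]
    [IsDirectedOrder ι] [Nonempty ι] {v : ι → PartialIsometry (H →L[ℂ] H)} (hv : Monotone v) :
    ∃ w : PartialIsometry (H →L[ℂ] H),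
      StrongTendsto (fun i => (v i).1) atTop w.1 ∧ ∀ i, v i ≤ w := by
  have hnorm : ∀ i, ‖(v i).1‖ ≤ 1 := fun i => (v i).2.norm_le_one
  obtain ⟨w, hw⟩ := exists_strongTendsto (l := atTop) hnorm fun ξ =>
    tendsto_of_sq_dist_le_sub (φ := fun i => ‖(v i).1 ξ‖ ^ 2)
      ⟨(1 * ‖ξ‖) ^ 2, Set.forall_mem_range.2 fun i =>
        pow_le_pow_left₀ (norm_nonneg _) ((v i).1.le_of_opNorm_le (hnorm i) ξ) 2⟩
      fun i j hij => by rw [dist_eq_norm, norm_sub_apply_sq_of_le (hv hij)]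
  have hext : ∀ i, w * (star (v i).1 * (v i).1) = (v i).1 := fun i =>
    hw.mul_eq_of_eventually <| (eventually_ge_atTop i).mono fun j hij => hv hij
  have hstar : ∀ i, star w * (v i).1 = star (v i).1 * (v i).1 := fun i =>
    hw.star_mul_eq_of_eventually <| (eventually_ge_atTop i).mono fun j hij =>
      star_mul_of_le (hv hij)
  have hpi : w * star w * w = w := by
    refine (hw.const_mul (w * star w)).unique (hw.congr' (.of_forall fun i => ?_))
    simp only [mul_assoc, hstar, hext]
  exact ⟨⟨w, hpi⟩, hw, hext⟩

end StrongLimits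

section Projections

variable {M : VonNeumannAlgebra H} {p q : H →L[ℂ] H}

theorem isProjIn_iff : IsProjIn M p ↔ p ∈ M ∧ IsStarProjection p :=
  and_congr_right fun _ => ⟨fun h => ⟨h.2, h.1⟩, fun h => ⟨h.2, h.1⟩⟩

namespace IsProjIn

theorem mem (hp : IsProjIn M p) : p ∈ M := hp.1

theorem isStarProjection (hp : IsProjIn M p) : IsStarProjection p := (isProjIn_iff.1 hp).2

theorem mul_self (hp : IsProjIn M p) : p * p = p := hp.2.2

theorem star_eq (hp : IsProjIn M p) : star p = p := hp.2.1

theorem one_sub (hp : IsProjIn M p) : IsProjIn M (1 - p) :=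
  isProjIn_iff.2 ⟨sub_mem (one_mem M) hp.mem, hp.isStarProjection.one_sub⟩

theorem sub (hp : IsProjIn M p) (hq : IsProjIn M q) (hpq : p * q = p) : IsProjIn M (q - p) :=
  isProjIn_iff.2 ⟨sub_mem hq.mem hp.mem,
    hp.isStarProjection.sub_of_mul_eq_left hq.isStarProjection hpq⟩

theorem mul (hp : IsProjIn M p) (hq : IsProjIn M q) (hpq : Commute p q) : IsProjIn M (p * q) :=
  isProjIn_iff.2 ⟨mul_mem hp.mem hq.mem, hp.isStarProjection.mul hq.isStarProjection hpq⟩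

end IsProjIn

theorem IsPartialIsometry.isProjIn_star_mul_self {v : H →L[ℂ] H} (hv : IsPartialIsometry v)
    (hM : v ∈ M) : IsProjIn M (star v * v) :=
  isProjIn_iff.2 ⟨mul_mem (star_mem hM) hM, hv.isStarProjection_star_mul_self⟩

theorem IsPartialIsometry.isProjIn_mul_star_self {v : H →L[ℂ] H} (hv : IsPartialIsometry v)
    (hM : v ∈ M) : IsProjIn M (v * star v) :=
  isProjIn_iff.2 ⟨mul_mem hM (star_mem hM), hv.isStarProjection_mul_star_self⟩

theorem isPartialIsometry_of_star_mul_self_eq (hp : IsProjIn M p) {v : H →L[ℂ] H}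
    (hv : star v * v = p) : IsPartialIsometry v :=
  isPartialIsometry_of_isStarProjection_star_mul_self (hv ▸ hp.isStarProjection)

theorem subEquiv_iff (hp : IsProjIn M p) (hq : IsProjIn M q) :
    SubEquiv M p q ↔ ∃ v ∈ M, star v * v = p ∧ q * v = v := by
  constructor
  · rintro ⟨r, -, ⟨v, hvM, hvp, hvr⟩, hrq⟩
    have hv := isPartialIsometry_of_star_mul_self_eq hp hvp
    refine ⟨v, hvM, hvp, ?_⟩
    rw [← hv, star_eq_adjoint, hvr, ← mul_assoc, hrq.2]
  · rintro ⟨v, hvM, hvp, hqv⟩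
    have hv := isPartialIsometry_of_star_mul_self_eq hp hvp
    have hr := hv.isProjIn_mul_star_self hvM
    have hqr : q * (v * star v) = v * star v := by rw [← mul_assoc, hqv]
    refine ⟨v * star v, hr, ⟨v, hvM, hvp, rfl⟩, ?_, hqr⟩
    simpa [hq.star_eq] using congrArg star hqr

end Projections

section SpanProjection

variable {M : VonNeumannAlgebra H} {S : Set H}

/-- The orthogonal projection onto the closed linear span of `S`. -/
def spanProj (S : Set H) : H →L[ℂ] H :=
  haveI := (Submodule.span ℂ S).isClosed_topologicalClosure.completeSpace_coe
  (Submodule.span ℂ S).topologicalClosure.starProjection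

theorem isStarProjection_spanProj (S : Set H) : IsStarProjection (spanProj S) :=
  isStarProjection_starProjection

theorem spanProj_apply_of_mem {ξ : H} (hξ : ξ ∈ S) : spanProj S ξ = ξ :=
  haveI := (Submodule.span ℂ S).isClosed_topologicalClosure.completeSpace_coe
  Submodule.starProjection_eq_self_iff.2 <|
    Submodule.le_topologicalClosure _ (Submodule.subset_span hξ)

theorem mul_spanProj_eq_mul_spanProj {a b : H →L[ℂ] H} (h : ∀ ξ ∈ S, a ξ = b ξ) :
    a * spanProj S = b * spanProj S := by
  have := (Submodule.span ℂ S).isClosed_topologicalClosure.completeSpace_coe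
  have hle : (Submodule.span ℂ S).topologicalClosure ≤
      LinearMap.eqLocus (a : H →ₗ[ℂ] H) (b : H →ₗ[ℂ] H) :=
    Submodule.topologicalClosure_minimal _ (Submodule.span_le.2 h) (isClosed_eq a.cont b.cont)
  ext ξ
  exact hle (Submodule.starProjection_apply_mem _ ξ)

theorem mul_spanProj_eq_zero {a : H →L[ℂ] H} (h : ∀ ξ ∈ S, a ξ = 0) : a * spanProj S = 0 := by
  simpa using mul_spanProj_eq_mul_spanProj (b := 0) h

theorem commute_spanProj {y : H →L[ℂ] H} (h : ∀ ξ ∈ S, y ξ ∈ S) (h' : ∀ ξ ∈ S, star y ξ ∈ S) :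
    Commute y (spanProj S) := by
  have hP := (isStarProjection_spanProj S).isSelfAdjoint.star_eq
  have key : ∀ x : H →L[ℂ] H, (∀ ξ ∈ S, x ξ ∈ S) → spanProj S * x * spanProj S = x * spanProj S :=
    fun x hx => mul_spanProj_eq_mul_spanProj fun ξ hξ => spanProj_apply_of_mem (hx ξ hξ)
  have hadj : spanProj S * y * spanProj S = spanProj S * y := by
    simpa [hP, mul_assoc] using congrArg star (key _ h')
  exact (key y h).symm.trans hadj

theorem isProjIn_spanProj (h : ∀ y ∈ M.commutant, ∀ ξ ∈ S, y ξ ∈ S) : IsProjIn M (spanProj S) := by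
  refine isProjIn_iff.2 ⟨?_, isStarProjection_spanProj S⟩
  rw [← M.commutant_commutant, VonNeumannAlgebra.mem_commutant_iff]
  exact fun y hy => commute_spanProj (h y hy) (h _ (star_mem hy))

end SpanProjection

section FunctionalCalculus

variable {M : VonNeumannAlgebra H} {T y P : H →L[ℂ] H}

theorem mem_of_forall_commute {a b : H →L[ℂ] H} (ha : a ∈ M)
    (h : ∀ z, Commute a z → Commute b z) : b ∈ M := by
  rw [← M.commutant_commutant, VonNeumannAlgebra.mem_commutant_iff]
  exact fun z hz => (h z (VonNeumannAlgebra.mem_commutant_iff.1 hz a ha)).symm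

theorem cfc_real_mem (hT : T ∈ M) (f : ℝ → ℝ) : cfc f T ∈ M :=
  mem_of_forall_commute hT fun _ hz => hz.cfc_real f

/-- Rescaling `y` by the inverse square root of `y* y + (1 - P)`. -/
theorem exists_star_mul_self_eq_of_isUnit (hy : y ∈ M) (hP : IsProjIn M P) (hyP : y * P = y)
    (hunit : IsUnit (star y * y + (1 - P))) : ∃ b ∈ M, star (y * b) * (y * b) = P := by
  set a := star y * y + (1 - P) with ha_def
  have ha : 0 ≤ a := add_nonneg (star_mul_self_nonneg y) hP.isStarProjection.one_sub_nonneg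
  have haM : a ∈ M := add_mem (mul_mem (star_mem hy) hy) hP.one_sub.mem
  have haP : a * P = star y * y := by
    rw [ha_def, add_mul, mul_assoc, hyP, hP.isStarProjection.one_sub_mul_self, add_zero]
  have hPa : P * a = star y * y := by
    simpa [hP.star_eq, (IsSelfAdjoint.of_nonneg ha).star_eq] using congrArg star haP
  obtain ⟨s, hs⟩ := (CFC.isUnit_sqrt_iff a).2 hunit
  have hsa : s.1 * s.1 = a := by rw [hs, CFC.sqrt_mul_sqrt_self a]
  have hcomm : ∀ z, Commute a z → Commute s⁻¹.1 z := fun z hz =>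
    Commute.units_inv_left <| by rw [hs]; exact hz.cfcₙ_nnreal _
  have hsP := hcomm P (haP.trans hPa.symm)
  have hstar : star s⁻¹.1 = s⁻¹.1 := by
    have hs_star : star s = s := Units.ext <| by
      rw [Units.coe_star, hs, (IsSelfAdjoint.of_nonneg (CFC.sqrt_nonneg a)).star_eq]
    rw [← Units.coe_star, star_inv, hs_star]
  refine ⟨s⁻¹.1, mem_of_forall_commute haM hcomm, ?_⟩
  calc star (y * s⁻¹.1) * (y * s⁻¹.1) = s⁻¹.1 * (star y * y) * s⁻¹.1 := by
        rw [star_mul, hstar]; simp only [mul_assoc]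
    _ = s⁻¹.1 * (s.1 * s.1) * (P * s⁻¹.1) := by rw [← haP, ← hsa]; simp only [mul_assoc]
    _ = P := by rw [← hsP.eq]; simp

/-- A continuous cutoff for the functional calculus: `clip k` vanishes on
`(-∞, 2⁻⁽ᵏ⁺¹⁾]` and equals `1` on `[2⁻ᵏ, ∞)`. -/
def clip (k : ℕ) (t : ℝ) : ℝ := min 1 (max 0 (2 ^ (k + 1) * t - 1))

theorem continuous_clip (k : ℕ) : Continuous (clip k) := by unfold clip; fun_prop

theorem clip_succ_mul_clip (k : ℕ) (t : ℝ) : clip (k + 1) t * clip k t = clip k t := by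
  rcases le_or_gt (2 ^ (k + 1) * t) 1 with h | h
  · simp [clip, h]
  · have : clip (k + 1) t = 1 := by
      rw [clip, min_eq_left]
      exact le_max_of_le_right (by rw [pow_succ]; linarith)
    rw [this, one_mul]

theorem mul_inv_max_mul_clip (k : ℕ) (t : ℝ) :
    t * (max t (2 ^ (k + 1))⁻¹)⁻¹ * clip k t = clip k t := by
  rcases le_or_gt (2 ^ (k + 1) * t) 1 with h | h
  · simp [clip, h]
  · have h' : (2 ^ (k + 1))⁻¹ < t := by rwa [inv_lt_iff_one_lt_mul₀' (by positivity)]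
    have : 0 < t := lt_trans (by positivity) h'
    rw [max_eq_left h'.le, mul_inv_cancel₀ this.ne', one_mul]

theorem abs_mul_clip_sub_le (k : ℕ) {t : ℝ} (ht : 0 ≤ t) : |t * clip k t - t| ≤ (2 ^ k)⁻¹ := by
  have h0 : 0 ≤ clip k t := le_min zero_le_one (le_max_left _ _)
  have h1 : clip k t ≤ 1 := min_le_left _ _
  rcases le_or_gt t (2 ^ k)⁻¹ with h | h
  · rw [abs_le]
    constructor <;> nlinarith
  · have h2 : 1 < 2 ^ k * t := by rwa [inv_lt_iff_one_lt_mul₀' (by positivity)] at h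
    have : clip k t = 1 := by
      rw [clip, min_eq_left]
      exact le_max_of_le_right (by rw [pow_succ]; linarith)
    simp [this]

/-- A substitute for the spectral projection of `T` for the interval `(2⁻⁽ᵏ⁺¹⁾, ∞)`, defined
through the continuous functional calculus only. -/
def spectralProj (k : ℕ) (T : H →L[ℂ] H) : H →L[ℂ] H :=
  spanProj (Set.range (cfc (clip k) T : H →L[ℂ] H))

theorem mul_spectralProj_eq_mul_spectralProj {k : ℕ} {a b : H →L[ℂ] H}
    (h : a * cfc (clip k) T = b * cfc (clip k) T) : a * spectralProj k T = b * spectralProj k T :=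
  mul_spanProj_eq_mul_spanProj <| Set.forall_mem_range.2 fun ξ => DFunLike.congr_fun h ξ

theorem spectralProj_mul_cfc_clip (k : ℕ) (T : H →L[ℂ] H) :
    spectralProj k T * cfc (clip k) T = cfc (clip k) T :=
  ContinuousLinearMap.ext fun ξ => spanProj_apply_of_mem ⟨ξ, rfl⟩

theorem isProjIn_spectralProj (k : ℕ) (hT : T ∈ M) : IsProjIn M (spectralProj k T) := by
  refine isProjIn_spanProj fun y hy => Set.forall_mem_range.2 fun ξ => ⟨y ξ, ?_⟩
  exact DFunLike.congr_fun (VonNeumannAlgebra.mem_commutant_iff.1 hy _ (cfc_real_mem hT _)) ξ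

theorem commute_spectralProj (k : ℕ) (hT : IsSelfAdjoint T) : Commute T (spectralProj k T) := by
  set h : H →L[ℂ] H := cfc (clip k) T
  have hrange : ∀ ξ ∈ Set.range h, T ξ ∈ Set.range h :=
    Set.forall_mem_range.2 fun ξ => ⟨T ξ, DFunLike.congr_fun ((Commute.refl T).cfc_real _).eq ξ⟩
  exact commute_spanProj hrange (by rwa [hT.star_eq])

theorem spectralProj_succ_mul (k : ℕ) (T : H →L[ℂ] H) :
    spectralProj (k + 1) T * spectralProj k T = spectralProj k T := by
  have hclip : cfc (clip (k + 1)) T * cfc (clip k) T = cfc (clip k) T := by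
    rw [← cfc_mul _ _ T (continuous_clip _).continuousOn (continuous_clip _).continuousOn]
    exact congrArg (cfc · T) (funext (clip_succ_mul_clip k))
  nth_rw 2 [← one_mul (spectralProj k T)]
  refine mul_spectralProj_eq_mul_spectralProj ?_
  rw [one_mul, ← hclip, ← mul_assoc, spectralProj_mul_cfc_clip]

theorem exists_mul_eq_spectralProj (k : ℕ) (hT : IsSelfAdjoint T) :
    ∃ c, T * c = spectralProj k T := by
  have hcont : Continuous fun t : ℝ => (max t (2 ^ (k + 1))⁻¹)⁻¹ :=
    (continuous_id.max continuous_const).inv₀ fun t =>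
      (lt_max_of_lt_right (by positivity : (0 : ℝ) < (2 ^ (k + 1))⁻¹)).ne'
  refine ⟨cfc (fun t : ℝ => (max t (2 ^ (k + 1))⁻¹)⁻¹) T * spectralProj k T, ?_⟩
  nth_rw 2 [← one_mul (spectralProj k T)]
  rw [← mul_assoc]
  refine mul_spectralProj_eq_mul_spectralProj ?_
  nth_rw 1 [← cfc_id ℝ T]
  rw [one_mul, ← cfc_mul id _ T continuousOn_id hcont.continuousOn,
    ← cfc_mul (fun t => id t * (max t (2 ^ (k + 1))⁻¹)⁻¹) _ T
      (continuous_id.mul hcont).continuousOn (continuous_clip k).continuousOn]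
  exact congrArg (cfc · T) (funext (mul_inv_max_mul_clip k))

theorem mul_eq_zero_of_forall_mul_spectralProj (hT : 0 ≤ T) {x : H →L[ℂ] H}
    (hx : ∀ k, x * spectralProj k T = 0) : x * T = 0 := by
  have hnorm : ∀ k, ‖T * cfc (clip k) T - T‖ ≤ (2 ^ k)⁻¹ := fun k => by
    have hcfc : T * cfc (clip k) T - T = cfc (fun t => id t * clip k t - id t) T := by
      rw [cfc_sub (fun t => id t * clip k t) id T
          (continuous_id.mul (continuous_clip k)).continuousOn continuousOn_id,
        cfc_mul id _ T continuousOn_id (continuous_clip k).continuousOn, cfc_id ℝ T]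
    rw [hcfc]
    exact norm_cfc_le (by positivity) fun t ht =>
      abs_mul_clip_sub_le k (spectrum_nonneg_of_nonneg hT ht)
  have hlim : Tendsto (fun k => T * cfc (clip k) T) atTop (𝓝 T) := by
    rw [tendsto_iff_norm_sub_tendsto_zero]
    refine squeeze_zero (fun _ => norm_nonneg _) hnorm ?_
    simpa using tendsto_pow_atTop_nhds_zero_of_lt_one (r := (2 : ℝ)⁻¹) (by norm_num) (by norm_num)
  have hzero : ∀ k, x * (T * cfc (clip k) T) = 0 := fun k => by
    rw [← ((Commute.refl T).cfc_real (clip k)).eq, ← spectralProj_mul_cfc_clip, ← mul_assoc,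
      ← mul_assoc, hx, zero_mul, zero_mul]
  refine tendsto_nhds_unique (hlim.const_mul x) ?_
  simp only [hzero, tendsto_const_nhds]

end FunctionalCalculus

section Comparison

variable {M : VonNeumannAlgebra H} {x P p q r : H →L[ℂ] H}

theorem isUnit_of_isSelfAdjoint_of_mul_eq_one {R : Type*} [Monoid R] [StarMul R] {a b : R}
    (ha : IsSelfAdjoint a) (h : a * b = 1) : IsUnit a :=
  isUnit_iff_exists_and_exists.2 ⟨⟨b, h⟩, star b, by simpa [ha.star_eq] using congrArg star h⟩

theorem isUnit_mul_add_one_sub {R : Type*} [Ring R] [StarRing R] {a c e : R}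
    (ha : IsSelfAdjoint a) (he : IsStarProjection e) (hae : Commute a e) (hc : a * c = e) :
    IsUnit (a * e + (1 - e)) := by
  have hsa : IsSelfAdjoint (a * e + (1 - e)) :=
    ((ha.commute_iff he.isSelfAdjoint).1 hae).add he.one_sub.isSelfAdjoint
  have h1 : a * e * (e * c * e) = e := by
    rw [hae.eq, mul_assoc, ← mul_assoc a, ← mul_assoc a, hae.eq, mul_assoc e a, hc]
    simp only [he.isIdempotentElem.eq]
  have h2 : (1 - e) * (e * c * e) = 0 := by
    rw [mul_assoc, ← mul_assoc, he.one_sub_mul_self, zero_mul]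
  refine isUnit_of_isSelfAdjoint_of_mul_eq_one (b := e * c * e + (1 - e)) hsa ?_
  rw [add_mul, mul_add, mul_add, h1, h2, mul_assoc a, he.mul_one_sub_self,
    he.one_sub.isIdempotentElem.eq, mul_zero, add_zero, zero_add, add_sub_cancel]

theorem exists_isPartialIsometry_ne_zero (hx : x ∈ M) (hx0 : x ≠ 0) (hqx : q * x = x)
    (hp : IsSelfAdjoint p) (hxp : x * p = x) :
    ∃ w ∈ M, IsPartialIsometry w ∧ w ≠ 0 ∧ q * w = w ∧ w * p = w := by
  set T := star x * x with hT_def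
  have hT0 : 0 ≤ T := star_mul_self_nonneg x
  obtain ⟨k, hk⟩ : ∃ k, spectralProj k T ≠ 0 := by
    by_contra! h
    have hT : 1 * T = 0 := mul_eq_zero_of_forall_mul_spectralProj hT0 fun k => by rw [h, mul_zero]
    rw [one_mul] at hT
    exact hx0 ((CStarRing.star_mul_self_eq_zero_iff x).1 hT)
  have hTsa := IsSelfAdjoint.of_nonneg hT0
  set P := spectralProj k T
  have hP : IsProjIn M P := isProjIn_spectralProj k (mul_mem (star_mem hx) hx)
  have hTP : T * P = P * T := (commute_spectralProj k hTsa).eq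
  obtain ⟨c, hc⟩ : ∃ c, T * c = P := exists_mul_eq_spectralProj k hTsa
  have hy : star (x * P) * (x * P) = T * P := by
    rw [star_mul, hP.star_eq, mul_assoc, ← mul_assoc (star x), ← hT_def, hTP, ← mul_assoc,
      hP.mul_self]
  have hunit : IsUnit (star (x * P) * (x * P) + (1 - P)) := by
    rw [hy]
    exact isUnit_mul_add_one_sub hTsa hP.isStarProjection hTP hc
  obtain ⟨b, hbM, hb⟩ := exists_star_mul_self_eq_of_isUnit (mul_mem hx hP.mem) hP
    (by rw [mul_assoc, hP.mul_self]) hunit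
  have hw := isPartialIsometry_of_star_mul_self_eq hP hb
  have hPp : P * p = P := by
    have hpT : p * T = T := by rw [hT_def, ← mul_assoc, ← hp.star_eq, ← star_mul, hxp]
    have hpP : p * P = P := by rw [← hc, ← mul_assoc, hpT]
    simpa [hp.star_eq, hP.star_eq] using congrArg star hpP
  refine ⟨x * P * b, mul_mem (mul_mem hx hP.mem) hbM, hw, fun h0 => hk ?_, ?_, ?_⟩
  · rw [← hb, h0, mul_zero]
  · rw [← mul_assoc, ← mul_assoc, hqx]
  · rw [← hw.mul_star_mul_self, hb, mul_assoc, hPp]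

theorem subEquiv_of_norm_lt_one (hP : IsProjIn M P) (hr : IsProjIn M r)
    (h : ‖(1 - r) * P‖ < 1) : SubEquiv M P r := by
  have hyP : r * P * P = r * P := by rw [mul_assoc, hP.mul_self]
  have heq : star (r * P) * (r * P) + (1 - P) = 1 - P * ((1 - r) * P) := by
    rw [star_mul, hr.star_eq, hP.star_eq]
    simp only [sub_mul, mul_sub, one_mul, mul_assoc, hP.mul_self]
    rw [← mul_assoc r r P, hr.mul_self]
    abel
  have hunit : IsUnit (star (r * P) * (r * P) + (1 - P)) := by
    rw [heq]
    refine isUnit_one_sub_of_norm_lt_one (lt_of_le_of_lt ?_ h)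
    exact (norm_mul_le _ _).trans <|
      mul_le_of_le_one_left (norm_nonneg _) hP.isStarProjection.norm_le
  obtain ⟨b, hbM, hb⟩ := exists_star_mul_self_eq_of_isUnit (mul_mem hr.mem hP.mem) hP hyP hunit
  refine (subEquiv_iff hP hr).2 ⟨r * P * b, mul_mem (mul_mem hr.mem hP.mem) hbM, hb, ?_⟩
  rw [← mul_assoc, ← mul_assoc, hr.mul_self]

theorem exists_isCentralProj_of_forall_mul_mul_eq_zero {a b : H →L[ℂ] H} (ha : a ∈ M)
    (h : ∀ y ∈ M, b * y * a = 0) : ∃ z, IsCentralProj M z ∧ z * a = a ∧ b * z = 0 := by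
  set S : Set H := {η | ∃ y ∈ M, ∃ ξ, y (a ξ) = η}
  have hS : ∀ x ∈ M, ∀ η ∈ S, x η ∈ S := by
    rintro x hx _ ⟨y, hy, ξ, rfl⟩
    exact ⟨x * y, mul_mem hx hy, ξ, rfl⟩
  refine ⟨spanProj S, ⟨isProjIn_spanProj ?_, fun x hx => ?_⟩, ?_, mul_spanProj_eq_zero ?_⟩
  · rintro y' hy' _ ⟨y, hy, ξ, rfl⟩
    have hcomm := VonNeumannAlgebra.mem_commutant_iff.1 hy' (y * a) (mul_mem hy ha)
    exact ⟨y, hy, y' ξ, DFunLike.congr_fun hcomm ξ⟩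
  · exact (commute_spanProj (hS x hx) (hS _ (star_mem hx))).eq.symm
  · ext ξ
    exact spanProj_apply_of_mem ⟨1, one_mem M, ξ, rfl⟩
  · rintro _ ⟨y, hy, ξ, rfl⟩
    exact DFunLike.congr_fun (h y hy) ξ

theorem exists_maximal_isPartialIsometry (M : VonNeumannAlgebra H) (p q : H →L[ℂ] H) :
    ∃ v : PartialIsometry (H →L[ℂ] H),
      Maximal (fun v => v.val ∈ M ∧ q * v.val = v.val ∧ v.val * p = v.val) v := by
  let zero : PartialIsometry (H →L[ℂ] H) := ⟨0, by simp [IsPartialIsometry]⟩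
  set s := {v : PartialIsometry (H →L[ℂ] H) | v.val ∈ M ∧ q * v.val = v.val ∧ v.val * p = v.val}
  have hchain : ∀ c ⊆ s, IsChain (· ≤ ·) c → ∀ w ∈ c, ∃ u ∈ s, ∀ v ∈ c, v ≤ u := by
    intro c hc hchain w hw
    have : Nonempty c := ⟨⟨w, hw⟩⟩
    have : IsDirectedOrder c := directedOn_iff_isDirectedOrder.1 hchain.directedOn
    obtain ⟨u, hu, hle⟩ := PartialIsometry.exists_strongTendsto_of_monotone
      (v := fun i : c => i.1) fun _ _ h => h
    refine ⟨u, ⟨hu.mem fun i => (hc i.2).1, ?_, ?_⟩, fun i hi => hle ⟨i, hi⟩⟩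
    · exact (hu.const_mul q).unique (hu.congr' (.of_forall fun i => (hc i.2).2.1.symm))
    · exact (hu.mul_const p).unique (hu.congr' (.of_forall fun i => (hc i.2).2.2.symm))
  obtain ⟨v, -, hv⟩ := zorn_le_nonempty₀ s hchain zero ⟨zero_mem M, mul_zero q, zero_mul p⟩
  exact ⟨v, hv⟩

theorem exists_orthogonal_isPartialIsometry {v y : H →L[ℂ] H} (hp : IsProjIn M p)
    (hq : IsProjIn M q) (hv : IsPartialIsometry v) (hvM : v ∈ M) (hqv : q * v = v) (hvp : v * p = v)
    (hy : y ∈ M) (hne : (q - v * star v) * y * (p - star v * v) ≠ 0) :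
    ∃ w ∈ M, IsPartialIsometry w ∧ w ≠ 0 ∧ star v * w = 0 ∧ v * star w = 0 ∧
      q * w = w ∧ w * p = w := by
  set a := p - star v * v with ha_def
  set b := q - v * star v with hb_def
  have hqv' : star v * q = star v := by simpa [hq.star_eq] using congrArg star hqv
  have ha : IsProjIn M a := (hv.isProjIn_star_mul_self hvM).sub hp (by rw [mul_assoc, hvp])
  have hb : IsProjIn M b := (hv.isProjIn_mul_star_self hvM).sub hq (by rw [mul_assoc, hqv'])
  have hqb : q * b = b := by rw [hb_def, mul_sub, hq.mul_self, ← mul_assoc, hqv]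
  have hap : a * p = a := by rw [ha_def, sub_mul, hp.mul_self, mul_assoc, hvp]
  have hva : v * a = 0 := by rw [ha_def, mul_sub, hvp, hv.mul_star_mul_self, sub_self]
  have hvb : star v * b = 0 := by
    have hvv : star v * (v * star v) = star v := by simpa using hv.star.mul_star_mul_self
    rw [hb_def, mul_sub, hqv', hvv, sub_self]
  obtain ⟨w, hwM, hw, hw0, hbw, hwa⟩ := exists_isPartialIsometry_ne_zero
    (mul_mem (mul_mem hb.mem hy) ha.mem) hne (by rw [← mul_assoc, ← mul_assoc, hb.mul_self])
    ha.isStarProjection.isSelfAdjoint (by rw [mul_assoc, ha.mul_self])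
  refine ⟨w, hwM, hw, hw0, ?_, ?_, ?_, ?_⟩
  · rw [← hbw, ← mul_assoc, hvb, zero_mul]
  · rw [← hwa, star_mul, ha.star_eq, ← mul_assoc, hva, zero_mul]
  · rw [← hbw, ← mul_assoc, hqb]
  · rw [← hwa, mul_assoc, hap]

theorem exists_comparison (hp : IsProjIn M p) (hq : IsProjIn M q) :
    ∃ v ∈ M, IsPartialIsometry v ∧ q * v = v ∧ v * p = v ∧ ∃ z, IsCentralProj M z ∧
      z * (p - star v * v) = p - star v * v ∧ (q - v * star v) * z = 0 := by
  obtain ⟨⟨v, hv⟩, ⟨hvM, hqv, hvp⟩, hmax⟩ := exists_maximal_isPartialIsometry M p q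
  refine ⟨v, hvM, hv, hqv, hvp, exists_isCentralProj_of_forall_mul_mul_eq_zero
    (sub_mem hp.mem (hv.isProjIn_star_mul_self hvM).mem) ?_⟩
  by_contra! ⟨y, hy, hne⟩
  obtain ⟨w, hwM, hw, hw0, hvw, hvw', hqw, hwp⟩ :=
    exists_orthogonal_isPartialIsometry hp hq hv hvM hqv hvp hy hne
  refine hw0 (hv.eq_zero_of_mul_star_add_mul_add hvw hvw' ?_)
  exact hmax (y := ⟨v + w, hv.add hw hvw hvw'⟩)
    ⟨add_mem hvM hwM, by rw [mul_add]; exact congrArg₂ _ hqv hqw,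
      by rw [add_mul]; exact congrArg₂ _ hvp hwp⟩ (hv.add_mul_star_mul_self hvw')

end Comparison

section GraphOperator

variable {M : VonNeumannAlgebra H} {ι : Type*}

/-- The graph of the column operator `η ↦ (a i η)ᵢ` from `H` to `ℓ²(ι, H)`, whose domain need not
be dense. The coordinate `none` carries the argument `η`. -/
def columnGraph (a : ι → H →L[ℂ] H) : Submodule ℂ (lp (fun _ : Option ι => H) 2) where
  carrier := {f | ∀ i, f (some i) = a i (f none)}
  add_mem' hf hg i := by simp [hf i, hg i]
  zero_mem' i := by simp
  smul_mem' c f hf i := by simp [hf i]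

instance (a : ι → H →L[ℂ] H) : CompleteSpace (columnGraph a) := by
  have hcont : ∀ i, Continuous fun f : lp (fun _ : Option ι => H) 2 => f i :=
    fun i => (lp.evalCLM ℂ (fun _ : Option ι => H) 2 i).continuous
  have hclosed : IsClosed {f : lp (fun _ : Option ι => H) 2 | ∀ i, f (some i) = a i (f none)} := by
    rw [Set.ofPred_forall]
    exact isClosed_iInter fun i => isClosed_eq (hcont _) ((a i).continuous.comp (hcont none))
  exact hclosed.completeSpace_coe

/-- Evaluation at one coordinate, as a map from the graph of the column operator. -/
def columnGraphEval (a : ι → H →L[ℂ] H) (i : Option ι) : columnGraph a →L[ℂ] H :=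
  lp.evalCLM ℂ (fun _ : Option ι => H) 2 i ∘L (columnGraph a).subtypeL

omit [CompleteSpace H] in
theorem norm_columnGraphEval_le (a : ι → H →L[ℂ] H) (i : Option ι) :
    ‖columnGraphEval a i‖ ≤ 1 :=
  opNorm_le_bound _ zero_le_one fun f => by
    rw [one_mul]
    exact lp.norm_apply_le_norm two_ne_zero (f : lp (fun _ : Option ι => H) 2) i

/-- The operator `(1 + ∑ i, star (a i) * a i)⁻¹`, defined without any convergence assumption as
the compression to `H` of the projection onto the graph of the column operator. -/
def columnInv (a : ι → H →L[ℂ] H) : H →L[ℂ] H :=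
  columnGraphEval a none ∘L adjoint (columnGraphEval a none)

theorem columnInv_nonneg (a : ι → H →L[ℂ] H) : 0 ≤ columnInv a :=
  (nonneg_iff_isPositive _).2 (isPositive_self_comp_adjoint _)

theorem norm_mul_columnInv_le (a : ι → H →L[ℂ] H) (i : ι) : ‖a i * columnInv a‖ ≤ 1 := by
  have heq : a i * columnInv a =
      columnGraphEval a (some i) ∘L adjoint (columnGraphEval a none) := by
    ext ξ
    exact ((adjoint (columnGraphEval a none) ξ).2 i).symm
  calc ‖a i * columnInv a‖ ≤ ‖columnGraphEval a (some i)‖ * ‖columnGraphEval a none‖ := by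
        rw [heq, ← (adjoint : (columnGraph a →L[ℂ] H) ≃ₗᵢ⋆[ℂ] _).norm_map (columnGraphEval a none)]
        exact opNorm_comp_le _ _
    _ ≤ 1 := mul_le_one₀ (norm_columnGraphEval_le a _) (opNorm_nonneg _)
      (norm_columnGraphEval_le a _)

theorem summable_of_summable_some {E : Type*} [NormedAddCommGroup E] [CompleteSpace E]
    {f : Option ι → E} (hf : Summable fun i => f (some i)) : Summable f :=
  summable_subtype_and_compl.1
    ⟨(Equiv.ofInjective _ (Option.some_injective ι)).summable_iff.1 hf, by
      rw [Set.compl_range_some]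
      exact (Set.finite_singleton none).summable f⟩

theorem apply_eq_zero_of_mul_columnInv_eq_zero {a : ι → H →L[ℂ] H} {x : H →L[ℂ] H}
    (hx : x * columnInv a = 0) {η : H} (hη : Summable fun i => ‖a i η‖ ^ 2) : x η = 0 := by
  set π := columnGraphEval a none
  have hxπ : x ∘L π = 0 := by
    have h : adjoint (adjoint (x ∘L π)) ∘L adjoint (x ∘L π) = 0 := by
      rw [adjoint_adjoint, adjoint_comp, comp_assoc, ← comp_assoc π, ← comp_assoc]
      exact (congrArg (· ∘L adjoint x) hx).trans (zero_comp _)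
    rw [adjoint_comp_self_eq_zero_iff] at h
    simpa using (adjoint.map_eq_zero_iff.1 h)
  have hmem : Memℓp (fun i : Option ι => i.elim η fun i => a i η) 2 := by
    refine memℓp_gen (summable_of_summable_some ?_)
    simpa using hη
  exact DFunLike.congr_fun hxπ ⟨⟨_, hmem⟩, fun i => rfl⟩

/-- The diagonal action of the commutant on the graph of the column operator. -/
def columnGraphMap {a : ι → H →L[ℂ] H} (y : H →L[ℂ] H) (hy : ∀ i, Commute (a i) y) :
    columnGraph a →L[ℂ] columnGraph a :=
  (lp.mapCLM 2 (fun _ : Option ι => y) (norm_nonneg y) fun _ => le_rfl).restrict fun f hf i =>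
    (congrArg y (hf i)).trans (DFunLike.congr_fun (hy i).eq.symm (f none))

theorem adjoint_columnGraphMap {a : ι → H →L[ℂ] H} {y : H →L[ℂ] H} (hy : ∀ i, Commute (a i) y)
    (hy' : ∀ i, Commute (a i) (star y)) :
    adjoint (columnGraphMap y hy) = columnGraphMap (star y) hy' := by
  refine ((eq_adjoint_iff _ _).2 fun f g => ?_).symm
  refine (lp.inner_eq_tsum _ _).trans ((tsum_congr fun i => ?_).trans (lp.inner_eq_tsum _ _).symm)
  exact adjoint_inner_left y _ _

theorem commute_columnInv {a : ι → H →L[ℂ] H} {y : H →L[ℂ] H} (hy : ∀ i, Commute (a i) y)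
    (hy' : ∀ i, Commute (a i) (star y)) : Commute (columnInv a) y := by
  set π := columnGraphEval a none
  have h : π ∘L columnGraphMap y hy = y ∘L π := rfl
  have h' : columnGraphMap y hy ∘L adjoint π = adjoint π ∘L y := by
    have hstar : π ∘L columnGraphMap (star y) hy' = star y ∘L π := rfl
    have := congrArg adjoint hstar
    rwa [adjoint_comp, adjoint_comp, ← adjoint_columnGraphMap hy hy', adjoint_adjoint,
      star_eq_adjoint, adjoint_adjoint] at this
  calc columnInv a * y = π ∘L columnGraphMap y hy ∘L adjoint π := by rw [h']; rfl
    _ = y * columnInv a := by rw [← comp_assoc, h]; rfl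

theorem columnInv_mem {a : ι → H →L[ℂ] H} (ha : ∀ i, a i ∈ M) : columnInv a ∈ M := by
  rw [← M.commutant_commutant, VonNeumannAlgebra.mem_commutant_iff]
  have hcomm : ∀ y ∈ M.commutant, ∀ i, Commute (a i) y := fun y hy i =>
    VonNeumannAlgebra.mem_commutant_iff.1 hy _ (ha i)
  exact fun y hy => (commute_columnInv (hcomm y hy) (hcomm _ (star_mem hy))).eq.symm

end GraphOperator

section Finite

variable {M : VonNeumannAlgebra H} {r e f z : H →L[ℂ] H}

namespace FiniteProj

theorem mul_star_self_eq_one (hfin : FiniteProj M 1) {v : H →L[ℂ] H} (hv : v ∈ M)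
    (h : star v * v = 1) : v * star v = 1 := by
  have hpi : IsPartialIsometry v := by rw [IsPartialIsometry, mul_assoc, h, mul_one]
  exact hfin _ (hpi.isProjIn_mul_star_self hv) ⟨mul_one _, one_mul _⟩ ⟨v, hv, h, rfl⟩

theorem star_mul_self_eq_one_of_isCentralProj (hfin : FiniteProj M 1) {v : H →L[ℂ] H} (hv : v ∈ M)
    (hz : IsCentralProj M z) (h₁ : z * (1 - star v * v) = 1 - star v * v)
    (h₂ : (1 - v * star v) * z = 0) : star v * v = 1 := by
  have hzv : Commute z v := hz.2 v hv
  have hzv' : Commute z (star v) := hz.2 _ (star_mem hv)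
  rw [sub_mul, one_mul, sub_eq_zero, eq_comm] at h₂
  set x := star v * z + (1 - z)
  have hstar : star x = v * z + (1 - z) := by
    simp [x, hz.1.star_eq, hzv.eq]
  have hiso : star x * x = 1 := by
    rw [star_mul_add_one_sub_mul_self hz.1.isStarProjection hzv' (by rwa [star_star]), star_star,
      h₂, add_sub_cancel]
  have hcoiso : x * star x = 1 := hfin.mul_star_self_eq_one
    (add_mem (mul_mem (star_mem hv) hz.1.mem) hz.1.one_sub.mem) hiso
  rw [← star_star x, hstar, star_star, star_mul_add_one_sub_mul_self hz.1.isStarProjection hzv hzv',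
    ← sub_eq_zero] at hcoiso
  rw [← sub_eq_zero, ← neg_eq_zero, neg_sub, ← h₁, hz.2 _ (sub_mem (one_mem M) (mul_mem
    (star_mem hv) hv)), sub_mul, one_mul, ← neg_eq_zero, ← hcoiso]
  abel

theorem exists_isometry_ge (hfin : FiniteProj M 1) {v : PartialIsometry (H →L[ℂ] H)}
    (hv : v.val ∈ M) : ∃ u : PartialIsometry (H →L[ℂ] H), u.val ∈ M ∧ star u.val * u.val = 1 ∧
      v ≤ u := by
  have he : IsProjIn M (1 - star v.val * v.val) := (v.2.isProjIn_star_mul_self hv).one_sub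
  have hf : IsProjIn M (1 - v.val * star v.val) := (v.2.isProjIn_mul_star_self hv).one_sub
  obtain ⟨w, hwM, hw, hfw, hwe, z, hz, hze, hzf⟩ := exists_comparison he hf
  have hvw : star v.val * w = 0 := by
    rw [← hfw, ← mul_assoc, v.2.star_mul_one_sub_eq_zero, zero_mul]
  have hvw' : v.val * star w = 0 := by
    rw [← hwe, star_mul, he.star_eq, ← mul_assoc, v.2.mul_one_sub_eq_zero, zero_mul]
  have hinitial : star (v.val + w) * (v.val + w) = star v.val * v.val + star w * w :=
    star_add_mul_add_of_star_mul_eq_zero hvw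
  have hfinal : (v.val + w) * star (v.val + w) = v.val * star v.val + w * star w := by
    simpa using star_add_mul_add_of_star_mul_eq_zero (v := star v.val) (w := star w) (by simpa)
  refine ⟨⟨v.val + w, v.2.add hw hvw hvw'⟩, add_mem hv hwM, ?_, v.2.add_mul_star_mul_self hvw'⟩
  refine hfin.star_mul_self_eq_one_of_isCentralProj (add_mem hv hwM) hz ?_ ?_
  · rwa [hinitial, ← sub_sub]
  · rwa [hfinal, ← sub_sub]

theorem exists_isometry_of_mul_eq (hfin : FiniteProj M 1) (hr : IsProjIn M r) {s : H →L[ℂ] H}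
    (hs : IsPartialIsometry s) (hsM : s ∈ M) (hrs : r * s = s) (hsr : s * r = s) :
    ∃ u ∈ M, star u * u = 1 ∧ r * u = u * r ∧ u * (star s * s) = s := by
  have hrr : star (1 - r) * (1 - r) = 1 - r := by rw [hr.one_sub.star_eq, hr.one_sub.mul_self]
  have hr₁ : IsPartialIsometry (1 - r) := isPartialIsometry_of_star_mul_self_eq hr.one_sub hrr
  have hs₁ : star s * (1 - r) = 0 := by
    rw [← hrs, star_mul, hr.star_eq, mul_assoc, hr.isStarProjection.mul_one_sub_self, mul_zero]
  have hs₂ : s * star (1 - r) = 0 := by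
    rw [hr.one_sub.star_eq, mul_sub, mul_one, hsr, sub_self]
  obtain ⟨u, huM, hu, hle⟩ := hfin.exists_isometry_ge (v := ⟨_, hs.add hr₁ hs₁ hs₂⟩)
    (add_mem hsM hr.one_sub.mem)
  have hsu : ⟨_, hs⟩ ≤ u := le_trans (PartialIsometry.le_def.2 (hs.add_mul_star_mul_self hs₂)) hle
  have hru : ⟨_, hr₁⟩ ≤ u := by
    refine le_trans (PartialIsometry.le_def.2 ?_) hle
    simp only [add_comm s]
    exact hr₁.add_mul_star_mul_self (by simpa using congrArg star hs₂)
  have hcomm : u.val * (1 - r) = (1 - r) * u.val := by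
    have h := PartialIsometry.star_mul_of_le hru
    rw [hrr] at h
    have h' := PartialIsometry.le_def.1 hru
    rw [hrr] at h'
    rw [h']
    simpa [hr.star_eq] using (congrArg star h).symm
  refine ⟨u.val, huM, hu, ?_, hsu⟩
  simpa [mul_sub, sub_mul] using hcomm.symm

/-- If `w` embeds `f` under `r`, then `v w*` acts under `r`, so it extends to an isometry `u`
commuting with `r`, and `u w` is the required extension of `v`. -/
theorem exists_extension (hfin : FiniteProj M 1) (hr : IsProjIn M r) (he : IsProjIn M e)
    (hf : IsProjIn M f) (hfe : f * e = e) (hfr : SubEquiv M f r) {v : H →L[ℂ] H} (hvM : v ∈ M)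
    (hv : star v * v = e) (hrv : r * v = v) :
    ∃ v' ∈ M, star v' * v' = f ∧ r * v' = v' ∧ v' * e = v := by
  obtain ⟨w, hwM, hw, hrw⟩ := (subEquiv_iff hf hr).1 hfr
  have hve : v * e = v := hv ▸ (isPartialIsometry_of_star_mul_self_eq he hv).mul_star_mul_self
  have hwr : star w * r = star w := by simpa [hr.star_eq] using congrArg star hrw
  have hswe : v * star w * (w * e) = v := by
    rw [mul_assoc, ← mul_assoc (star w), hw, hfe, hve]
  have hsswe : star (v * star w) * (v * star w) * (w * e) = w * e := by
    rw [mul_assoc, hswe, star_mul, star_star, mul_assoc, hv]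
  have hs : IsPartialIsometry (v * star w) := by
    rw [IsPartialIsometry, mul_assoc, star_mul, star_star, mul_assoc w, ← mul_assoc (star v), hv,
      ← mul_assoc w, ← mul_assoc, hswe]
  obtain ⟨u, huM, hu, hru, hus⟩ := hfin.exists_isometry_of_mul_eq hr hs
    (mul_mem hvM (star_mem hwM)) (by rw [← mul_assoc, hrv]) (by rw [mul_assoc, hwr])
  refine ⟨u * w, mul_mem huM hwM, ?_, ?_, ?_⟩
  · rw [star_mul, mul_assoc, ← mul_assoc (star u), hu, one_mul, hw]
  · rw [← mul_assoc, hru, mul_assoc, hrw]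
  · rw [mul_assoc, ← hsswe, ← mul_assoc u, hus, hswe]

theorem exists_isPartialIsometry_of_monotone (hfin : FiniteProj M 1) (hr : IsProjIn M r)
    {P : ℕ → H →L[ℂ] H} (hP : ∀ k, IsProjIn M (P k)) (hmono : ∀ k, P (k + 1) * P k = P k)
    (hsub : ∀ k, SubEquiv M (P k) r) :
    ∃ v ∈ M, IsPartialIsometry v ∧ r * v = v ∧ ∀ k, star v * v * P k = P k := by
  let X : ℕ → Type u := fun k => {v : H →L[ℂ] H // v ∈ M ∧ star v * v = P k ∧ r * v = v}
  have hnext : ∀ k (x : X k), ∃ y : X (k + 1), y.1 * P k = x.1 := fun k x => by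
    obtain ⟨v', h₁, h₂, h₃, h₄⟩ := hfin.exists_extension hr (hP k) (hP (k + 1)) (hmono k)
      (hsub (k + 1)) x.2.1 x.2.2.1 x.2.2.2
    exact ⟨⟨v', h₁, h₂, h₃⟩, h₄⟩
  choose next hnext using hnext
  obtain ⟨v₀, hv₀⟩ := (subEquiv_iff (hP 0) hr).1 (hsub 0)
  let v : (k : ℕ) → X k := fun k => Nat.rec (motive := X) ⟨v₀, hv₀⟩ next k
  let V : ℕ → PartialIsometry (H →L[ℂ] H) := fun k =>
    ⟨(v k).1, isPartialIsometry_of_star_mul_self_eq (hP k) (v k).2.2.1⟩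
  have hV : Monotone V := monotone_nat_of_le_succ fun k => by
    rw [PartialIsometry.le_def, (v k).2.2.1]
    exact hnext k (v k)
  obtain ⟨w, hw, hle⟩ := PartialIsometry.exists_strongTendsto_of_monotone hV
  refine ⟨w.val, hw.mem fun k => (v k).2.1, w.2, ?_, fun k => ?_⟩
  · exact (hw.const_mul r).unique (hw.congr' (.of_forall fun k => (v k).2.2.2.symm))
  · have h := PartialIsometry.initial_mul_of_le (hle k)
    rwa [(v k).2.2.1] at h

end FiniteProj

end Finite

section OrthogonalCopies

variable {M : VonNeumannAlgebra H} {e : H →L[ℂ] H} {s : ℕ → H →L[ℂ] H}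

/-- Truncation of the operator shifting the range of `s k` onto that of `s (k + 1)`. -/
def partialShift (s : ℕ → H →L[ℂ] H) (n : ℕ) : H →L[ℂ] H :=
  ∑ k ∈ Finset.range n, s (k + 1) * star (s k)

theorem partialShift_mul (he : IsStarProjection e) (hs : ∀ n, star (s n) * s n = e)
    (horth : Pairwise fun m n => star (s m) * s n = 0) (n k : ℕ) :
    partialShift s n * s k = if k < n then s (k + 1) else 0 := by
  have hterm : ∀ j, s (j + 1) * star (s j) * s k = if k = j then s (k + 1) else 0 := fun j => by
    split_ifs with hkj
    · rw [← hkj, mul_assoc, hs, mul_eq_self_of_star_mul_self_eq he (hs _)]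
    · rw [mul_assoc, horth (Ne.symm hkj), mul_zero]
  simp only [partialShift, Finset.sum_mul, hterm, Finset.sum_ite_eq, Finset.mem_range]

theorem star_partialShift_mul_succ (he : IsStarProjection e) (hs : ∀ n, star (s n) * s n = e)
    (horth : Pairwise fun m n => star (s m) * s n = 0) (n k : ℕ) :
    star (partialShift s n) * s (k + 1) = if k < n then s k else 0 := by
  have hterm : ∀ j, s j * star (s (j + 1)) * s (k + 1) = if k = j then s k else 0 := fun j => by
    split_ifs with hkj
    · rw [← hkj, mul_assoc, hs, mul_eq_self_of_star_mul_self_eq he (hs _)]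
    · rw [mul_assoc, horth fun h => hkj (Nat.succ_injective h).symm, mul_zero]
  simp only [partialShift, star_sum, star_mul, star_star, Finset.sum_mul, hterm,
    Finset.sum_ite_eq, Finset.mem_range]

theorem star_partialShift_mul_zero (horth : Pairwise fun m n => star (s m) * s n = 0) (n : ℕ) :
    star (partialShift s n) * s 0 = 0 := by
  simp only [partialShift, star_sum, star_mul, star_star, Finset.sum_mul]
  exact Finset.sum_eq_zero fun j _ => by rw [mul_assoc, horth j.succ_ne_zero, mul_zero]

theorem exists_strongTendsto_partialShift (he : IsStarProjection e)
    (hs : ∀ n, star (s n) * s n = e) (horth : Pairwise fun m n => star (s m) * s n = 0) :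
    ∃ w, IsPartialIsometry w ∧ StrongTendsto (partialShift s) atTop w := by
  have hse : ∀ n, s n * e = s n := fun n => mul_eq_self_of_star_mul_self_eq he (hs n)
  have hterm : ∀ n, IsPartialIsometry (s (n + 1) * star (s n)) := fun n => by
    rw [IsPartialIsometry, star_mul, star_star, mul_assoc, mul_assoc (s n), ← mul_assoc (star _),
      hs, ← mul_assoc (s n), hse, ← mul_assoc, mul_assoc _ (star (s n)), hs, hse]
  have hinitial : ∀ n, partialShift s n * star (s (n + 1) * star (s n)) = 0 := fun n => by
    rw [star_mul, star_star, ← mul_assoc, partialShift_mul he hs horth, if_neg (lt_irrefl n),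
      zero_mul]
  have hfinal : ∀ n, star (partialShift s n) * (s (n + 1) * star (s n)) = 0 := fun n => by
    rw [← mul_assoc, star_partialShift_mul_succ he hs horth, if_neg (lt_irrefl n), zero_mul]
  have hsucc : ∀ n, partialShift s (n + 1) = partialShift s n + s (n + 1) * star (s n) :=
    fun n => Finset.sum_range_succ _ n
  have hpi : ∀ n, IsPartialIsometry (partialShift s n) := fun n => by
    induction n with
    | zero => simp [partialShift, IsPartialIsometry]
    | succ n ih => rw [hsucc]; exact ih.add (hterm n) (hfinal n) (hinitial n)
  obtain ⟨w, hw, -⟩ := PartialIsometry.exists_strongTendsto_of_monotone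
    (v := fun n => ⟨partialShift s n, hpi n⟩) <| monotone_nat_of_le_succ fun n => by
      simp only [PartialIsometry.le_def, hsucc]
      exact (hpi n).add_mul_star_mul_self (hinitial n)
  exact ⟨w.val, w.2, hw⟩

/-- If `w` is the limit of the shifts, then `w + (1 - w* w)` is a proper isometry: its range is
orthogonal to that of `s 0`. -/
theorem FiniteProj.eq_zero_of_orthogonal_copies (hfin : FiniteProj M 1) (he : IsStarProjection e)
    (hsM : ∀ n, s n ∈ M) (hs : ∀ n, star (s n) * s n = e)
    (horth : Pairwise fun m n => star (s m) * s n = 0) : e = 0 := by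
  obtain ⟨w, hwpi, hw⟩ := exists_strongTendsto_partialShift he hs horth
  have hwM : w ∈ M := hw.mem fun n => sum_mem fun k _ => mul_mem (hsM _) (star_mem (hsM _))
  have hws : ∀ k, w * s k = s (k + 1) := fun k =>
    hw.mul_eq_of_eventually <| (eventually_gt_atTop k).mono fun n hn => by
      rw [partialShift_mul he hs horth, if_pos hn]
  have hws' : ∀ k, star w * s (k + 1) = s k := fun k =>
    hw.star_mul_eq_of_eventually <| (eventually_gt_atTop k).mono fun n hn => by
      rw [star_partialShift_mul_succ he hs horth, if_pos hn]
  have hws₀ : star w * s 0 = 0 := hw.star_mul_eq_of_eventually <|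
    .of_forall fun n => star_partialShift_mul_zero horth n
  have hF := hwpi.isProjIn_star_mul_self hwM
  have hFs : ∀ k, star w * w * s k = s k := fun k => by rw [mul_assoc, hws, hws']
  have hFw : star w * w * w = w :=
    (hw.const_mul _).unique <| hw.congr' <| .of_forall fun n => by
      simp only [partialShift, Finset.mul_sum, ← mul_assoc, hFs]
  have hwF : star w * (1 - star w * w) = 0 := by
    rw [← hF.one_sub.star_eq, ← star_mul, sub_mul, one_mul, hFw, sub_self, star_zero]
  have hiso : star (w + (1 - star w * w)) * (w + (1 - star w * w)) = 1 := by
    rw [star_add_mul_add_of_star_mul_eq_zero hwF, hF.one_sub.star_eq, hF.one_sub.mul_self,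
      add_sub_cancel]
  have hker : star (w + (1 - star w * w)) * s 0 = 0 := by
    rw [star_add, hF.one_sub.star_eq, add_mul, hws₀, sub_mul, one_mul, hFs, sub_self, add_zero]
  have hs₀ : s 0 = 0 := by
    rw [← one_mul (s 0), ← hfin.mul_star_self_eq_one (add_mem hwM hF.one_sub.mem) hiso, mul_assoc,
      hker, mul_zero]
  rw [← hs 0, hs₀, mul_zero]

end OrthogonalCopies

section CyclicProjection

variable {M : VonNeumannAlgebra H} {D : Set H} {x : H →L[ℂ] H} {ξ : H}

/-- The cyclic projection of `D`: the projection onto the closed subspace generated by `D` under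
the commutant of `M`, which is the smallest projection of `M` fixing `D`. -/
def cyclicProj (M : VonNeumannAlgebra H) (D : Set H) : H →L[ℂ] H :=
  spanProj {η | ∃ y ∈ M.commutant, ∃ ξ ∈ D, y ξ = η}

theorem isProjIn_cyclicProj (D : Set H) : IsProjIn M (cyclicProj M D) := by
  refine isProjIn_spanProj ?_
  rintro y hy _ ⟨y', hy', ξ, hξ, rfl⟩
  exact ⟨y * y', mul_mem hy hy', ξ, hξ, rfl⟩

theorem cyclicProj_apply_of_mem (hξ : ξ ∈ D) : cyclicProj M D ξ = ξ :=
  spanProj_apply_of_mem ⟨1, one_mem _, ξ, hξ, rfl⟩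

theorem mul_cyclicProj_eq_mul_cyclicProj {a b : H →L[ℂ] H} (ha : a ∈ M) (hb : b ∈ M)
    (h : ∀ ξ ∈ D, a ξ = b ξ) : a * cyclicProj M D = b * cyclicProj M D := by
  refine mul_spanProj_eq_mul_spanProj ?_
  rintro _ ⟨y, hy, ξ, hξ, rfl⟩
  have hcomm : ∀ x ∈ M, x (y ξ) = y (x ξ) := fun x hx =>
    congrArg (fun z : H →L[ℂ] H => z ξ) (VonNeumannAlgebra.mem_commutant_iff.1 hy x hx)
  rw [hcomm a ha, hcomm b hb, h ξ hξ]

theorem mul_cyclicProj_eq_zero (hx : x ∈ M) (h : ∀ ξ ∈ D, x ξ = 0) : x * cyclicProj M D = 0 := by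
  simpa using mul_cyclicProj_eq_mul_cyclicProj hx (zero_mem M) h

theorem mul_cyclicProj_eq_self (hx : x ∈ M) (h : ∀ ξ ∈ D, x ξ = ξ) :
    x * cyclicProj M D = cyclicProj M D := by
  simpa using mul_cyclicProj_eq_mul_cyclicProj hx (one_mem M) h

theorem cyclicProj_mul_mul_cyclicProj {D' : Set H} (hx : x ∈ M) (h : ∀ ξ ∈ D, x ξ ∈ D') :
    cyclicProj M D' * x * cyclicProj M D = x * cyclicProj M D :=
  mul_cyclicProj_eq_mul_cyclicProj (mul_mem (isProjIn_cyclicProj D').mem hx) hx fun ξ hξ =>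
    cyclicProj_apply_of_mem (h ξ hξ)

theorem IsProjIn.eq_zero_of_forall_cyclicProj {p : H →L[ℂ] H} (hp : IsProjIn M p)
    (h : ∀ ξ, p * cyclicProj M {ξ} = cyclicProj M {ξ} → cyclicProj M {ξ} = 0) : p = 0 := by
  ext ξ
  have hfix : p * cyclicProj M {p ξ} = cyclicProj M {p ξ} := mul_cyclicProj_eq_self hp.mem <| by
    rintro _ rfl
    rw [← mul_apply_eq_comp, hp.mul_self]
  have hξ : cyclicProj M {p ξ} (p ξ) = p ξ := cyclicProj_apply_of_mem rfl
  rw [← hξ, h _ hfix, zero_apply, zero_apply]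

end CyclicProjection

section Approximation

variable {M : VonNeumannAlgebra H} {p q r : H →L[ℂ] H} {D : Set H}

theorem SubEquiv.trans (hp : IsProjIn M p) (hq : IsProjIn M q) (hr : IsProjIn M r)
    (hpq : SubEquiv M p q) (hqr : SubEquiv M q r) : SubEquiv M p r := by
  obtain ⟨v, hvM, hv, hqv⟩ := (subEquiv_iff hp hq).1 hpq
  obtain ⟨w, hwM, hw, hrw⟩ := (subEquiv_iff hq hr).1 hqr
  refine (subEquiv_iff hp hr).2 ⟨w * v, mul_mem hwM hvM, ?_, by rw [← mul_assoc, hrw]⟩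
  rw [star_mul, mul_assoc, ← mul_assoc (star w), hw, hqv, hv]

theorem subEquiv_spectralProj_of_norm_one_sub_mul_le {T : H →L[ℂ] H} (hT : IsSelfAdjoint T)
    (hTM : T ∈ M) (hr : IsProjIn M r) {P : ℕ → H →L[ℂ] H} (hP : ∀ n, IsProjIn M (P n))
    (hPr : ∀ n, SubEquiv M (P n) r) (hPT : ∀ n, ‖(1 - P n) * T‖ ≤ (1 / 2) ^ n) (k : ℕ) :
    SubEquiv M (spectralProj k T) r := by
  obtain ⟨c, hc⟩ := exists_mul_eq_spectralProj k hT
  have hlim : Tendsto (fun n : ℕ => (1 / 2 : ℝ) ^ n * ‖c‖) atTop (𝓝 0) := by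
    simpa using (tendsto_pow_atTop_nhds_zero_of_lt_one (by norm_num) one_half_lt_one).mul_const ‖c‖
  obtain ⟨n, hn⟩ := (hlim.eventually_lt_const one_pos).exists
  refine .trans (isProjIn_spectralProj k hTM) (hP n) hr ?_ (hPr n)
  refine subEquiv_of_norm_lt_one (isProjIn_spectralProj k hTM) (hP n) ?_
  calc ‖(1 - P n) * spectralProj k T‖ = ‖(1 - P n) * T * c‖ := by rw [mul_assoc, hc]
    _ ≤ ‖(1 - P n) * T‖ * ‖c‖ := norm_mul_le _ _
    _ ≤ (1 / 2) ^ n * ‖c‖ := by gcongr; exact hPT n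
    _ < 1 := hn

/-- A noncommutative Egorov argument: the operators `2ⁿ (1 - P n)` are all bounded on the spectral
projections of one positive operator `T ∈ M`, and no `x ≠ 0` below the cyclic projection of `D`
annihilates `T`. -/
theorem subEquiv_cyclicProj_of_norm_sub_le (hfin : FiniteProj M 1) (hr : IsProjIn M r)
    {P : ℕ → H →L[ℂ] H} (hP : ∀ n, IsProjIn M (P n)) (hPr : ∀ n, SubEquiv M (P n) r)
    (hPD : ∀ n, ∀ η ∈ D, ‖η - P n η‖ ≤ (1 / 4) ^ n) : SubEquiv M (cyclicProj M D) r := by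
  let a : ℕ → H →L[ℂ] H := fun n => (2 ^ n : ℂ) • (1 - P n)
  have haM : ∀ n, a n ∈ M := fun n => M.smul_mem (hP n).one_sub.mem _
  have hTM := columnInv_mem haM
  have hT := columnInv_nonneg a
  have hPT : ∀ n, ‖(1 - P n) * columnInv a‖ ≤ (1 / 2) ^ n := fun n => by
    have h := norm_mul_columnInv_le a n
    rw [smul_mul_assoc, norm_smul, norm_pow, Complex.norm_ofNat] at h
    rwa [one_div_pow, le_div_iff₀' (by positivity)]
  obtain ⟨v, hvM, hv, hrv, hvP⟩ := hfin.exists_isPartialIsometry_of_monotone hr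
    (fun k => isProjIn_spectralProj k hTM) (fun k => spectralProj_succ_mul k _)
    (subEquiv_spectralProj_of_norm_one_sub_mul_le hT.isSelfAdjoint hTM hr hP hPr hPT)
  have hvT : (1 - star v * v) * columnInv a = 0 :=
    mul_eq_zero_of_forall_mul_spectralProj hT fun k => by rw [sub_mul, one_mul, hvP, sub_self]
  have hE := isProjIn_cyclicProj (M := M) D
  have hvE : star v * v * cyclicProj M D = cyclicProj M D := by
    have hzero := mul_cyclicProj_eq_zero (D := D) (hv.isProjIn_star_mul_self hvM).one_sub.mem
      fun η hη => apply_eq_zero_of_mul_columnInv_eq_zero hvT <| by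
        refine .of_nonneg_of_le (fun _ => sq_nonneg _) (fun n => ?_)
          (summable_geometric_of_lt_one (r := (1 / 4 : ℝ)) (by norm_num) (by norm_num))
        calc ‖a n η‖ ^ 2 = (2 ^ n * ‖η - P n η‖) ^ 2 := by simp [a, norm_smul]
          _ ≤ (2 ^ n * (1 / 4) ^ n) ^ 2 := by gcongr; exact hPD n η hη
          _ = (1 / 4) ^ n := by rw [← mul_pow, ← pow_mul, mul_comm n, pow_mul]; norm_num
    rw [sub_mul, one_mul, sub_eq_zero] at hzero
    exact hzero.symm
  refine (subEquiv_iff hE hr).2 ⟨v * cyclicProj M D, mul_mem hvM hE.mem, ?_, ?_⟩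
  · rw [star_mul, hE.star_eq, mul_assoc, ← mul_assoc (star v), hvE, hE.mul_self]
  · rw [← mul_assoc, hrv]

variable {ι : Type*} {l : Filter ι} [l.NeBot] {Q : ι → H →L[ℂ] H}

theorem subEquiv_cyclicProj_of_tendsto (hfin : FiniteProj M 1) (hr : IsProjIn M r)
    (hD : D.Finite) (hQ : ∀ᶠ i in l, IsProjIn M (Q i)) (hQr : ∀ᶠ i in l, SubEquiv M (Q i) r)
    (hlim : ∀ η ∈ D, Tendsto (fun i => Q i η) l (𝓝 η)) : SubEquiv M (cyclicProj M D) r := by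
  have happrox : ∀ n : ℕ, ∃ i, IsProjIn M (Q i) ∧ SubEquiv M (Q i) r ∧
      ∀ η ∈ D, ‖η - Q i η‖ ≤ (1 / 4) ^ n := fun n => by
    refine (hQ.and (hQr.and ((eventually_all_finite hD).2 fun η hη => ?_))).exists
    have hnorm : Tendsto (fun i => ‖η - Q i η‖) l (𝓝 0) := by
      simpa using ((hlim η hη).const_sub η).norm
    exact hnorm.eventually_le_const (by positivity)
  choose i hQi hQir hQiD using happrox
  exact subEquiv_cyclicProj_of_norm_sub_le hfin hr hQi hQir hQiD

end Approximation

section Semicontinuity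

variable {M : VonNeumannAlgebra H} {p p₀ q r e E : H →L[ℂ] H} {ξ : H}
variable {ι : Type*} {l : Filter ι} [l.NeBot] {Q : ι → H →L[ℂ] H}

/-- The identity of `E - e` extends to an embedding of `E` under `r`; restrict it to `e`. -/
theorem FiniteProj.exists_copy_orthogonal_sub (hfin : FiniteProj M 1) (hr : IsProjIn M r)
    (he : IsProjIn M e) (hE : IsProjIn M E) (hre : r * e = 0) (hEe : E * e = e)
    (hrE : (r + e) * E = E) (hEr : SubEquiv M E r) :
    ∃ s ∈ M, star s * s = e ∧ r * s = s ∧ (E - e) * s = 0 := by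
  have heE : e * E = e := by simpa [he.star_eq, hE.star_eq] using congrArg star hEe
  have hP : IsProjIn M (E - e) := he.sub hE heE
  have hrP : r * (E - e) = E - e := by
    rw [mul_sub, hre, sub_zero, eq_sub_iff_add_eq]
    rwa [add_mul, heE] at hrE
  obtain ⟨v, hvM, hv, hrv, hvP⟩ := hfin.exists_extension hr hP hE
    (by rw [mul_sub, hE.mul_self, hEe]) hEr hP.mem (by rw [hP.star_eq, hP.mul_self]) hrP
  refine ⟨v * e, mul_mem hvM he.mem, ?_, by rw [← mul_assoc, hrv], ?_⟩
  · rw [star_mul, he.star_eq, mul_assoc, ← mul_assoc (star v), hv, hEe, he.mul_self]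
  · have hPv : E - e = (E - e) * star v := by simpa [hP.star_eq] using congrArg star hvP.symm
    rw [hPv, mul_assoc, ← mul_assoc (star v), hv, hEe, sub_mul, hEe, he.mul_self, sub_self]

/-- The cyclic projection of `ξ` and the vectors `t ξ` splits as `e` plus a projection under `r`
containing the ranges of all `t ∈ S`. -/
theorem exists_copy_cyclicProj_orthogonal (hfin : FiniteProj M 1) (hr : IsProjIn M r)
    (hre : r * cyclicProj M {ξ} = 0) (hQ : ∀ᶠ i in l, IsProjIn M (Q i))
    (hQr : ∀ᶠ i in l, SubEquiv M (Q i) r) (hlim : StrongTendsto Q l (r + cyclicProj M {ξ}))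
    {S : Set (H →L[ℂ] H)} (hSfin : S.Finite)
    (hS : ∀ t ∈ S, t ∈ M ∧ star t * t = cyclicProj M {ξ} ∧ r * t = t) :
    ∃ s ∈ M, star s * s = cyclicProj M {ξ} ∧ r * s = s ∧ ∀ t ∈ S, star t * s = 0 := by
  set e := cyclicProj M {ξ}
  have he : IsProjIn M e := isProjIn_cyclicProj _
  have her : e * r = 0 := by simpa [he.star_eq, hr.star_eq] using congrArg star hre
  have het : ∀ t ∈ S, e * t = 0 := fun t ht => by
    rw [← (hS t ht).2.2, ← mul_assoc, her, zero_mul]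
  set D : Set H := insert ξ ((fun t : H →L[ℂ] H => t ξ) '' S)
  set E := cyclicProj M D
  have hE : IsProjIn M E := isProjIn_cyclicProj _
  have hfix : ∀ η ∈ D, (r + e) η = η := by
    have heξ : e ξ = ξ := cyclicProj_apply_of_mem rfl
    rintro _ (rfl | ⟨t, ht, rfl⟩)
    · rw [← heξ, ← mul_apply_eq_comp, add_mul, hre, he.mul_self, zero_add]
    · rw [← mul_apply_eq_comp, add_mul, (hS t ht).2.2, het t ht, add_zero]
  have hEr : SubEquiv M E r := subEquiv_cyclicProj_of_tendsto hfin hr ((hSfin.image _).insert ξ)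
    hQ hQr fun η hη => by simpa only [hfix η hη] using hlim η
  have hEe : E * e = e := by
    simpa using cyclicProj_mul_mul_cyclicProj (D := {ξ}) (D' := D) (one_mem M) (by simp [D])
  have hEt : ∀ t ∈ S, (E - e) * t = t := fun t ht => by
    have h : E * t * e = t * e := cyclicProj_mul_mul_cyclicProj (hS t ht).1 <| by
      rintro _ rfl
      exact Set.mem_insert_of_mem _ (Set.mem_image_of_mem _ ht)
    rw [sub_mul, het t ht, sub_zero]
    rwa [mul_assoc, mul_eq_self_of_star_mul_self_eq he.isStarProjection (hS t ht).2.1] at h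
  obtain ⟨s, hsM, hs, hrs, hEs⟩ := hfin.exists_copy_orthogonal_sub hr he hE hre hEe
    (mul_cyclicProj_eq_self (add_mem hr.mem he.mem) hfix) hEr
  refine ⟨s, hsM, hs, hrs, fun t ht => ?_⟩
  rw [← hEt t ht, star_mul, star_sub, hE.star_eq, he.star_eq, mul_assoc, hEs, mul_zero]

theorem cyclicProj_eq_zero_of_strongTendsto (hfin : FiniteProj M 1) (hr : IsProjIn M r)
    (hre : r * cyclicProj M {ξ} = 0) (hQ : ∀ᶠ i in l, IsProjIn M (Q i))
    (hQr : ∀ᶠ i in l, SubEquiv M (Q i) r) (hlim : StrongTendsto Q l (r + cyclicProj M {ξ})) :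
    cyclicProj M {ξ} = 0 := by
  have : Std.Symm fun s t : H →L[ℂ] H => star s * t = 0 :=
    ⟨fun s t h => by simpa using congrArg star h⟩
  obtain ⟨s, hs, horth⟩ := exists_seq_of_forall_finset_exists'
    (fun s => s ∈ M ∧ star s * s = cyclicProj M {ξ} ∧ r * s = s)
    (fun s t : H →L[ℂ] H => star s * t = 0) fun S hS => by
      obtain ⟨s, hsM, hs, hrs, hSs⟩ :=
        exists_copy_cyclicProj_orthogonal hfin hr hre hQ hQr hlim S.finite_toSet hS
      exact ⟨s, ⟨hsM, hs, hrs⟩, hSs⟩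
  exact hfin.eq_zero_of_orthogonal_copies (isProjIn_cyclicProj _).isStarProjection
    (fun n => (hs n).1) (fun n => (hs n).2.1) horth

theorem subEquiv_centralProj_mul {z v : H →L[ℂ] H} (hz : IsCentralProj M z) (hq : IsProjIn M q)
    (hp₀ : IsProjIn M p₀) (hr : IsProjIn M r) (hvM : v ∈ M)
    (hvz : (p₀ - v * star v) * z = 0) (hrv : r * (star v * z) = star v * z)
    (hqp : SubEquiv M q p₀) : SubEquiv M (z * q) r := by
  obtain ⟨u, huM, hu, hpu⟩ := (subEquiv_iff hq hp₀).1 hqp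
  refine (subEquiv_iff (hz.1.mul hq (hz.2 q hq.mem)) hr).2
    ⟨star v * z * u, mul_mem (mul_mem (star_mem hvM) hz.1.mem) huM, ?_, by rw [← mul_assoc, hrv]⟩
  rw [sub_mul, sub_eq_zero] at hvz
  calc star (star v * z * u) * (star v * z * u) = star u * z * (v * star v * z) * u := by
        simp only [star_mul, star_star, hz.1.star_eq, mul_assoc]
    _ = star u * z * z * (p₀ * u) := by rw [← hvz, ← hz.2 p₀ hp₀.mem]; simp only [mul_assoc]
    _ = z * q := by rw [mul_assoc (star u), hz.1.mul_self, hpu, ← hz.2 _ (star_mem huM), mul_assoc,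
        hu]

/-- By comparability, some maximal `v` embeds a subprojection of `p` under `p₀`, and the defect
`p - v* v` lives under a central `z` where the final projection of `v` is all of `p₀`. On a cyclic
piece `e` of the defect, the projections `z Q i` tend to `z p` but embed under `z p - e`. -/
theorem subEquiv_of_strongTendsto (hfin : FiniteProj M 1) (hp : IsProjIn M p)
    (hp₀ : IsProjIn M p₀) (hQ : ∀ᶠ i in l, IsProjIn M (Q i))
    (hQp₀ : ∀ᶠ i in l, SubEquiv M (Q i) p₀) (hlim : StrongTendsto Q l p) : SubEquiv M p p₀ := by
  obtain ⟨v, hvM, hv, hp₀v, hvp, z, hz, hza, hbz⟩ := exists_comparison hp hp₀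
  set a := p - star v * v
  suffices ha : a = 0 from (subEquiv_iff hp hp₀).2 ⟨v, hvM, (sub_eq_zero.1 ha).symm, hp₀v⟩
  have hpv : p * star v = star v := by simpa [hp.star_eq] using congrArg star hvp
  have ha : IsProjIn M a := (hv.isProjIn_star_mul_self hvM).sub hp (by rw [mul_assoc, hvp])
  have hpa : p * a = a := by rw [mul_sub, hp.mul_self, ← mul_assoc, hpv]
  have hav : a * star v = 0 := by
    rw [sub_mul, hpv, sub_eq_zero, eq_comm]
    simpa only [IsPartialIsometry, star_star] using hv.star
  have hzp : IsProjIn M (z * p) := hz.1.mul hp (hz.2 p hp.mem)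
  refine ha.eq_zero_of_forall_cyclicProj fun ξ hae => ?_
  set e := cyclicProj M {ξ}
  have he : IsProjIn M e := isProjIn_cyclicProj _
  have hea : e * a = e := by simpa [ha.star_eq, he.star_eq] using congrArg star hae
  have hzpe : z * p * e = e := by rw [← hae, ← mul_assoc, mul_assoc z, hpa, hza]
  have hr : IsProjIn M (z * p - e) := he.sub hzp <| by
    simpa [hzp.star_eq, he.star_eq] using congrArg star hzpe
  have hrv : (z * p - e) * (star v * z) = star v * z := by
    rw [← mul_assoc, sub_mul, mul_assoc z, hpv, ← hea, mul_assoc e, hav, mul_zero, sub_zero,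
      hz.2 _ (star_mem hvM), mul_assoc, hz.1.mul_self]
  exact cyclicProj_eq_zero_of_strongTendsto hfin hr
    (by rw [sub_mul, hzpe, he.mul_self, sub_self])
    (hQ.mono fun i hi => hz.1.mul hi (hz.2 _ hi.mem))
    ((hQ.and hQp₀).mono fun i hi => subEquiv_centralProj_mul hz hi.1 hp₀ hr hvM hbz hrv hi.2)
    (by rw [sub_add_cancel]; exact hlim.const_mul z)

end Semicontinuity

section MurrayVonNeumann

variable {M : VonNeumannAlgebra H} {p q : H →L[ℂ] H}

theorem mvNEquiv_iff : MvNEquiv M p q ↔ ∃ v ∈ M, star v * v = p ∧ v * star v = q := by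
  simp only [MvNEquiv, star_eq_adjoint]

theorem mvNEquiv_equivalence (M : VonNeumannAlgebra H) :
    Equivalence fun p q : ProjSet M => MvNEquiv M p.1 q.1 where
  refl p := mvNEquiv_iff.2 ⟨p.1, p.2.mem, by rw [p.2.star_eq, p.2.mul_self],
    by rw [p.2.star_eq, p.2.mul_self]⟩
  symm h := by
    obtain ⟨v, hvM, hvp, hvq⟩ := mvNEquiv_iff.1 h
    exact mvNEquiv_iff.2 ⟨star v, star_mem hvM, by rwa [star_star], by rwa [star_star]⟩
  trans {p q r} hpq hqr := by
    obtain ⟨v, hvM, hvp, hvq⟩ := mvNEquiv_iff.1 hpq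
    obtain ⟨w, hwM, hwq, hwr⟩ := mvNEquiv_iff.1 hqr
    have hv := isPartialIsometry_of_star_mul_self_eq p.2 hvp
    have hwq' := mul_eq_self_of_star_mul_self_eq q.2.isStarProjection hwq
    refine mvNEquiv_iff.2 ⟨w * v, mul_mem hwM hvM, ?_, ?_⟩
    · rw [star_mul, mul_assoc, ← mul_assoc (star w), hwq, ← hvq, hv, hvp]
    · rw [star_mul, mul_assoc, ← mul_assoc v, hvq, ← mul_assoc, hwq', hwr]

theorem pquotMk_eq_pquotMk_iff {p q : ProjSet M} :
    pquotMk M p = pquotMk M q ↔ MvNEquiv M p.1 q.1 := by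
  rw [pquotMk, Quot.eq, (mvNEquiv_equivalence M).eqvGen_iff]

theorem MvNEquiv.subEquiv (hq : IsProjIn M q) (h : MvNEquiv M p q) : SubEquiv M p q :=
  ⟨q, hq, h, hq.mul_self, hq.mul_self⟩

theorem FiniteProj.mvNEquiv_one_sub (hfin : FiniteProj M 1) (hp : IsProjIn M p)
    (h : MvNEquiv M p q) : MvNEquiv M (1 - p) (1 - q) := by
  obtain ⟨v, hvM, hvp, hvq⟩ := mvNEquiv_iff.1 h
  have hv := isPartialIsometry_of_star_mul_self_eq hp hvp
  obtain ⟨u, huM, hu, hvu⟩ := hfin.exists_isometry_ge (v := ⟨v, hv⟩) hvM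
  have hup : u.val * p = v := hvp ▸ hvu
  refine mvNEquiv_iff.2 ⟨u.val * (1 - p), mul_mem huM hp.one_sub.mem, ?_, ?_⟩
  · rw [star_mul, mul_assoc, ← mul_assoc (star u.val), hu, one_mul, hp.one_sub.star_eq,
      hp.one_sub.mul_self]
  · rw [star_mul, hp.one_sub.star_eq, mul_assoc, ← mul_assoc (1 - p), hp.one_sub.mul_self, sub_mul,
      one_mul, mul_sub, hfin.mul_star_self_eq_one huM hu, ← hvq, ← hup, star_mul, hp.star_eq,
      mul_assoc, ← mul_assoc p, hp.mul_self]

/-- Adding embeddings of `p` under `q` and of `1 - p` under `1 - q` gives an isometry, hence a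
unitary. -/
theorem FiniteProj.mvNEquiv_of_subEquiv (hfin : FiniteProj M 1) (hp : IsProjIn M p)
    (hq : IsProjIn M q) (h : SubEquiv M p q) (h' : SubEquiv M (1 - p) (1 - q)) :
    MvNEquiv M p q := by
  obtain ⟨v, hvM, hv, hqv⟩ := (subEquiv_iff hp hq).1 h
  obtain ⟨w, hwM, hw, hqw⟩ := (subEquiv_iff hp.one_sub hq.one_sub).1 h'
  have hqw₀ : q * w = 0 := by rwa [sub_mul, one_mul, sub_eq_self] at hqw
  have hvw : star v * w = 0 := by
    rw [← hqv, star_mul, hq.star_eq, mul_assoc, hqw₀, mul_zero]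
  have hvp : v * p = v := mul_eq_self_of_star_mul_self_eq hp.isStarProjection hv
  have hwp : w * p = 0 := by
    have h := mul_eq_self_of_star_mul_self_eq hp.one_sub.isStarProjection hw
    rwa [mul_sub, mul_one, sub_eq_self] at h
  have hunitary : (v + w) * star (v + w) = 1 := hfin.mul_star_self_eq_one (add_mem hvM hwM) <| by
    rw [star_add_mul_add_of_star_mul_eq_zero hvw, hv, hw, add_sub_cancel]
  have hqvw : q * (v + w) = v := by rw [mul_add, hqv, hqw₀, add_zero]
  have hvw' : v * star w = 0 := by
    rw [← hvp, mul_assoc, ← hp.star_eq, ← star_mul, hwp, star_zero, mul_zero]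
  refine mvNEquiv_iff.2 ⟨v, hvM, hv, ?_⟩
  calc v * star v = v * star (v + w) := by rw [star_add, mul_add, hvw', add_zero]
    _ = q * (v + w) * star (v + w) := by rw [hqvw]
    _ = q := by rw [mul_assoc, hunitary, mul_one]

theorem mvNEquiv_of_strongTendsto (hfin : FiniteProj M 1) (hp : IsProjIn M p)
    (hq : IsProjIn M q) {ι : Type*} {l : Filter ι} [l.NeBot] {P : ι → H →L[ℂ] H}
    (hP : ∀ᶠ i in l, IsProjIn M (P i)) (hPq : ∀ᶠ i in l, MvNEquiv M (P i) q)
    (hlim : StrongTendsto P l p) : MvNEquiv M p q := by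
  refine hfin.mvNEquiv_of_subEquiv hp hq ?_ ?_
  · exact subEquiv_of_strongTendsto hfin hp hq hP (hPq.mono fun i hi => hi.subEquiv hq) hlim
  · refine subEquiv_of_strongTendsto hfin hp.one_sub hq.one_sub (hP.mono fun i hi => hi.one_sub)
      ((hP.and hPq).mono fun i hi => (hfin.mvNEquiv_one_sub hi.1 hi.2).subEquiv hq.one_sub) ?_
    exact fun ξ => (hlim ξ).const_sub ξ

theorem continuous_projSet_apply (M : VonNeumannAlgebra H) (ξ : H) :
    Continuous fun p : ProjSet M => p.1 ξ :=
  (continuous_apply ξ).comp continuous_induced_dom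

end MurrayVonNeumann

/-- In a finite von Neumann algebra, singletons of `P(M)/∼` are closed
in the quotient operator topology; that is, the quotient topology is `T₁`. -/
theorem pquot_t1Space (M : VonNeumannAlgebra H)
    (hfin : FiniteProj M (1 : H →L[ℂ] H)) :
    T1Space (PQuot M) := by
  refine ⟨Quot.ind fun q => ?_⟩
  rw [← isQuotientMap_quot_mk.isClosed_preimage]
  refine isClosed_of_closure_subset fun p hp => ?_
  let l : Filter (ProjSet M) := 𝓝[pquotMk M ⁻¹' {pquotMk M q}] p
  have : l.NeBot := mem_closure_iff_nhdsWithin_neBot.1 hp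
  refine pquotMk_eq_pquotMk_iff.2 <| mvNEquiv_of_strongTendsto hfin p.2 q.2
    (l := l) (P := Subtype.val) (.of_forall Subtype.property) ?_ fun ξ =>
      ((continuous_projSet_apply M ξ).tendsto p).mono_left nhdsWithin_le_nhds
  exact eventually_mem_nhdsWithin.mono fun p' hp' => pquotMk_eq_pquotMk_iff.1 hp'
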